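/- arXiv:1904.06223 — 5 statements merged into one kernel-verified Lean document; each statement's English description precedes it below -/
import Mathlib

section
/- Let α > -1 and 0 < p < ∞ with p < α + 2. Then the norm of the point evaluation functional δ_z on the weighted Dirichlet space D^p_α satisfies ‖δ_z‖ ≍ 1/(1-|z|²)^{(α+2-p)/p}, i.e., there exist constants c, C > 0 independent of z ∈ 𝔻 such that c/(1-|z|²)^{(α+2-p)/p} ≤ sup{|f(z)| : f ∈ D^p_α, ‖f‖_{D^p_α} ≤ 1} ≤ C/(1-|z|²)^{(α+2-p)/p} for all z ∈ 𝔻. -/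
open MeasureTheory Metric Set Filter Topology ENNReal

noncomputable section

/-- The open unit disk in ℂ. -/
def unitDisk : Set ℂ := Metric.ball (0 : ℂ) 1

/-- The normalized Lebesgue area measure `dA = (1/π) dx dy` on ℂ. -/
def areaMeasure : Measure ℂ := (ENNReal.ofReal (Real.pi)⁻¹) • (volume : Measure ℂ)

/-- `∫_𝔻 |f'(z)|^p (1-|z|²)^α dA(z)`, as an extended nonnegative real. -/
def dirichletLintegral (p α : ℝ) (f : ℂ → ℂ) : ℝ≥0∞ :=
  ∫⁻ z in unitDisk, ENNReal.ofReal (‖deriv f z‖ ^ p * (1 - ‖z‖ ^ 2) ^ α) ∂areaMeasure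

/-- Membership in the weighted Dirichlet space `D^p_α`: analytic on 𝔻 with finite norm. -/
def MemDirichlet (p α : ℝ) (f : ℂ → ℂ) : Prop :=
  DifferentiableOn ℂ f unitDisk ∧ dirichletLintegral p α f < ⊤

/-- The norm of the weighted Dirichlet space `D^p_α`:
`(|f(0)|^p + ∫_𝔻 |f'(z)|^p (1-|z|²)^α dA(z))^{1/p}`. -/
def dirichletNorm (p α : ℝ) (f : ℂ → ℂ) : ℝ :=
  (‖f 0‖ ^ p + (dirichletLintegral p α f).toReal) ^ (1 / p)


lemma aux_circle (h : ℂ → ℂ) (hd : DiffContOnCl ℂ h (ball 0 1)) :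
    ENNReal.ofReal ‖h 0‖ * volume (Ioc (0 : ℝ) (2 * Real.pi)) ≤
      ∫⁻ θ in Ioc (0 : ℝ) (2 * Real.pi), ENNReal.ofReal ‖h (circleMap 0 1 θ)‖ := by
  have h1 := DiffContOnCl.circleAverage (f := h) (c := 0) (R := 1) (by simpa using hd)
  rw [Real.circleAverage_def, intervalIntegral.integral_of_le (by positivity)] at h1
  have h2 : ‖∫ θ in Ioc (0 : ℝ) (2 * Real.pi), h (circleMap 0 1 θ)‖ₑ ≤
    ∫⁻ θ in Ioc (0 : ℝ) (2 * Real.pi), ‖h (circleMap 0 1 θ)‖ₑ := enorm_integral_le_lintegral_enorm _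
  simp only [ofReal_norm]
  refine le_trans ?_ h2
  rw [← ofReal_norm, ← ofReal_norm, Real.volume_Ioc, ← ENNReal.ofReal_mul (norm_nonneg _)]
  apply ENNReal.ofReal_le_ofReal
  rw [← h1, norm_smul]
  rw [Real.norm_of_nonneg (by positivity)]
  apply le_of_eq
  have := Real.pi_pos
  field_simp
  ring

lemma aux_mean (g : ℂ → ℂ) (c : ℂ) (R : ℝ) (hg : DifferentiableOn ℂ g (ball c R)) :
    ENNReal.ofReal ‖g c‖ * volume (ball c R) ≤ ∫⁻ w in ball c R, ENNReal.ofReal ‖g w‖ := by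
  set G : ℂ → ℝ≥0∞ := indicator (ball c R) (fun w => ENNReal.ofReal ‖g w‖) with hG
  have hGm : Measurable G := by
    classical
    rw [hG, ← piecewise_eq_indicator]
    refine ContinuousOn.measurable_piecewise ?_ continuous_zero.continuousOn measurableSet_ball
    exact ENNReal.continuous_ofReal.comp_continuousOn hg.continuousOn.norm
  have hrot : ∀ θ : ℝ, ∫⁻ w, G (c + circleMap 0 1 θ * w) = ∫⁻ w, G w := by
    intro θ
    have h1 := (rotation (Circle.exp θ)).measurePreserving.lintegral_comp
      (f := fun w => G (c + w)) (by fun_prop)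
    rw [lintegral_add_left_eq_self (fun w => G w) c] at h1
    rw [← h1]
    apply lintegral_congr
    intro w
    simp [circleMap, rotation_apply, Circle.coe_exp]
  have hswap : ∫⁻ θ in Ioc (0 : ℝ) (2 * Real.pi), ∫⁻ w, G (c + circleMap 0 1 θ * w) =
      ∫⁻ w, ∫⁻ θ in Ioc (0 : ℝ) (2 * Real.pi), G (c + circleMap 0 1 θ * w) := by
    apply lintegral_lintegral_swap
    apply Measurable.aemeasurable
    have : Measurable (circleMap 0 1) := (continuous_circleMap 0 1).measurable
    unfold Function.uncurry
    fun_prop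
  simp only [hrot, lintegral_const, Measure.restrict_apply_univ] at hswap
  have hlow : ∫⁻ w in ball (0:ℂ) R, ENNReal.ofReal ‖g c‖ * volume (Ioc (0 : ℝ) (2 * Real.pi)) ≤
      ∫⁻ w, ∫⁻ θ in Ioc (0 : ℝ) (2 * Real.pi), G (c + circleMap 0 1 θ * w) := by
    refine le_trans ?_ (setLIntegral_le_lintegral (ball (0:ℂ) R) _)
    apply setLIntegral_mono' measurableSet_ball
    intro w hw
    have hw' : ‖w‖ < R := by simpa using hw
    have hmaps : ∀ z ∈ closedBall (0:ℂ) 1, c + z * w ∈ ball c R := by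
      intro z hz
      have hz' : ‖z‖ ≤ 1 := by simpa using hz
      simp only [mem_ball, dist_self_add_left, norm_mul]
      nlinarith [norm_nonneg w, norm_nonneg z]
    have h1 := aux_circle (fun z => g (c + z * w)) (by
      apply DifferentiableOn.diffContOnCl
      rw [closure_ball _ one_ne_zero]
      exact hg.comp (by fun_prop) hmaps)
    simp only [zero_mul, add_zero] at h1
    refine h1.trans (le_of_eq ?_)
    apply lintegral_congr
    intro θ
    rw [hG, indicator_of_mem]
    exact hmaps _ (by simp)
  rw [← hswap, lintegral_const, Measure.restrict_apply_univ] at hlow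
  rw [hG, lintegral_indicator measurableSet_ball] at hlow
  have hv : volume (ball (0:ℂ) R) = volume (ball c R) := by
    rw [Measure.addHaar_ball_center volume c]
  rw [hv, mul_right_comm] at hlow
  rwa [ENNReal.mul_le_mul_iff_left] at hlow
  · simp [Real.pi_pos]
  · rw [Real.volume_Ioc]; exact ENNReal.ofReal_ne_top

lemma aux_mean_real (g : ℂ → ℂ) (c : ℂ) (R J : ℝ) (hR : 0 < R) (hJ : 0 ≤ J)
    (hg : DifferentiableOn ℂ g (ball c R))
    (h : ∫⁻ w in ball c R, ENNReal.ofReal ‖g w‖ ≤ ENNReal.ofReal J) :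
    ‖g c‖ * (Real.pi * R ^ 2) ≤ J := by
  have h1 := (aux_mean g c R hg).trans h
  have hv : volume (ball c R) = ENNReal.ofReal (Real.pi * R ^ 2) := by
    rw [Complex.volume_ball, ENNReal.ofReal_mul Real.pi_pos.le, ENNReal.ofReal_pow hR.le, mul_comm]
    congr 1
    rw [← NNReal.coe_real_pi, ENNReal.ofReal_coe_nnreal]
  rw [hv, ← ENNReal.ofReal_mul (norm_nonneg _), ENNReal.ofReal_le_ofReal_iff hJ] at h1
  exact h1

lemma aux_lint_bound (g : ℂ → ℂ) (c : ℂ) (R I p a b : ℝ) (hR : 0 < R) (hI : 0 ≤ I)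
    (ha : 0 ≤ a) (hb : 0 ≤ b)
    (hle : ∀ w ∈ ball c R, ‖g w‖ ≤ a + b * ‖g w‖ ^ p)
    (h : ∫⁻ w in ball c R, ENNReal.ofReal (‖g w‖ ^ p) ≤ ENNReal.ofReal I) :
    ∫⁻ w in ball c R, ENNReal.ofReal ‖g w‖ ≤ ENNReal.ofReal (a * (Real.pi * R ^ 2) + b * I) := by
  have hv : volume (ball c R) = ENNReal.ofReal (Real.pi * R ^ 2) := by
    rw [Complex.volume_ball, ENNReal.ofReal_mul Real.pi_pos.le, ENNReal.ofReal_pow hR.le, mul_comm]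
    congr 1
    rw [← NNReal.coe_real_pi, ENNReal.ofReal_coe_nnreal]
  calc ∫⁻ w in ball c R, ENNReal.ofReal ‖g w‖
      ≤ ∫⁻ w in ball c R, (ENNReal.ofReal a + ENNReal.ofReal b * ENNReal.ofReal (‖g w‖ ^ p)) := by
        apply setLIntegral_mono' measurableSet_ball
        intro w hw
        rw [← ENNReal.ofReal_mul hb, ← ENNReal.ofReal_add ha (by positivity)]
        exact ENNReal.ofReal_le_ofReal (hle w hw)
    _ = ENNReal.ofReal a * ENNReal.ofReal (Real.pi * R ^ 2) +
        ENNReal.ofReal b * ∫⁻ w in ball c R, ENNReal.ofReal (‖g w‖ ^ p) := by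
        rw [lintegral_add_left measurable_const, lintegral_const_mul' _ _ ENNReal.ofReal_ne_top,
          lintegral_const, Measure.restrict_apply_univ, hv]
    _ ≤ ENNReal.ofReal a * ENNReal.ofReal (Real.pi * R ^ 2) +
        ENNReal.ofReal b * ENNReal.ofReal I := by gcongr
    _ = _ := by
        rw [← ENNReal.ofReal_mul ha, ← ENNReal.ofReal_mul hb, ← ENNReal.ofReal_add] <;> positivity

lemma aux_sub_ge (p : ℝ) (hp : 1 ≤ p) (g : ℂ → ℂ) (c : ℂ) (R I : ℝ) (hR : 0 < R) (hI : 0 ≤ I)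
    (hg : DifferentiableOn ℂ g (ball c R))
    (h : ∫⁻ w in ball c R, ENNReal.ofReal (‖g w‖ ^ p) ≤ ENNReal.ofReal I) :
    ‖g c‖ ^ p * R ^ 2 ≤ 2 ^ p * I := by
  rcases (norm_nonneg (g c)).eq_or_lt with h0 | h0
  · rw [← h0, Real.zero_rpow (by linarith), zero_mul]; positivity
  set l := ‖g c‖ / 2 with hl
  have hlpos : 0 < l := by positivity
  have h1 := aux_lint_bound g c R I p l (l ^ (1 - p)) hR hI hlpos.le (by positivity) (by
    intro w _
    rcases le_total ‖g w‖ l with h2 | h2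
    · have : 0 ≤ l ^ (1 - p) * ‖g w‖ ^ p := by positivity
      linarith
    · have hw : 0 < ‖g w‖ := hlpos.trans_le h2
      have h3 : l ^ (p - 1) ≤ ‖g w‖ ^ (p - 1) := Real.rpow_le_rpow hlpos.le h2 (by linarith)
      have h4 : ‖g w‖ ^ p = ‖g w‖ ^ (p - 1) * ‖g w‖ := by
        rw [← Real.rpow_add_one hw.ne']; congr 1; ring
      have h5 : l ^ (1 - p) * l ^ (p - 1) = 1 := by
        rw [← Real.rpow_add hlpos]; simp
      have h6 : 1 ≤ l ^ (1 - p) * ‖g w‖ ^ (p - 1) := by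
        calc 1 = l ^ (1 - p) * l ^ (p - 1) := h5.symm
          _ ≤ _ := by gcongr
      rw [h4, ← mul_assoc]
      nlinarith) h
  have h2 := aux_mean_real g c R _ hR (by positivity) hg h1
  have h3 : l * (Real.pi * R ^ 2) ≤ l ^ (1 - p) * I := by
    have : ‖g c‖ = 2 * l := by rw [hl]; ring
    rw [this] at h2
    linarith
  have h4 : l ^ p * (Real.pi * R ^ 2) ≤ I := by
    have h5 : l ^ (p - 1) * (l * (Real.pi * R ^ 2)) ≤ l ^ (p - 1) * (l ^ (1 - p) * I) := by gcongr
    have h6 : l ^ (p - 1) * l ^ (1 - p) = 1 := by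
      rw [← Real.rpow_add hlpos]; simp
    have h7 : l ^ p = l ^ (p - 1) * l := by
      rw [← Real.rpow_add_one hlpos.ne']; congr 1; ring
    calc _ = l ^ (p - 1) * (l * (Real.pi * R ^ 2)) := by rw [h7]; ring
      _ ≤ _ := h5
      _ = (l ^ (p - 1) * l ^ (1 - p)) * I := by ring
      _ = I := by rw [h6, one_mul]
  have h8 : ‖g c‖ ^ p = 2 ^ p * l ^ p := by
    rw [← Real.mul_rpow (by norm_num) hlpos.le]; congr 1; rw [hl]; ring
  rw [h8, mul_assoc]
  gcongr
  refine le_trans ?_ h4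
  gcongr
  nlinarith [Real.pi_gt_three, sq_nonneg R]

lemma aux_sub_lt (p : ℝ) (hp0 : 0 < p) (hp : p < 1) (g : ℂ → ℂ) (c : ℂ) (R I : ℝ) (hR : 0 < R)
    (hI : 0 ≤ I) (hg : DifferentiableOn ℂ g (closedBall c R))
    (h : ∫⁻ w in ball c R, ENNReal.ofReal (‖g w‖ ^ p) ≤ ENNReal.ofReal I) :
    ‖g c‖ ^ p * R ^ 2 ≤ 4 * (4 ^ (1 / p)) ^ (1 - p) * I := by
  obtain ⟨w0, hw0, hmax⟩ := (isCompact_closedBall c R).exists_isMaxOn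
    (f := fun w => ‖g w‖ ^ p * (R - ‖w - c‖) ^ 2) ⟨c, by simp [hR.le]⟩ (by
      apply ContinuousOn.mul
      · exact hg.continuousOn.norm.rpow_const (fun _ _ => Or.inr hp0.le)
      · fun_prop)
  have hmax' : ∀ w ∈ closedBall c R, ‖g w‖ ^ p * (R - ‖w - c‖) ^ 2 ≤
    ‖g w0‖ ^ p * (R - ‖w0 - c‖) ^ 2 := fun w hw => hmax hw
  have hc := hmax' c (by simp [hR.le])
  simp only [sub_self, norm_zero, sub_zero] at hc
  refine hc.trans ?_
  set d := R - ‖w0 - c‖ with hd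
  set A := ‖g w0‖ with hA
  have hd0 : 0 ≤ d := by
    have := mem_closedBall_iff_norm.1 hw0
    linarith
  have hA0 : 0 ≤ A := norm_nonneg _
  rcases hd0.eq_or_lt with h0 | hdpos
  · rw [← h0]; simp; positivity
  rcases hA0.eq_or_lt with h0 | hApos
  · rw [← h0, Real.zero_rpow hp0.ne', zero_mul]; positivity
  have hsub : ball w0 (d / 2) ⊆ ball c R := by
    intro w hw
    rw [mem_ball_iff_norm] at hw ⊢
    have := norm_add_le (w - w0) (w0 - c)
    simp only [sub_add_sub_cancel] at this
    linarith
  set L := (4:ℝ) ^ (1 / p) * A with hL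
  have hLpos : 0 < L := by positivity
  have hLp : L ^ p = 4 * A ^ p := by
    rw [hL, Real.mul_rpow (by positivity) hA0, ← Real.rpow_mul (by norm_num), one_div_mul_cancel hp0.ne',
      Real.rpow_one]
  have hle : ∀ w ∈ ball w0 (d / 2), ‖g w‖ ≤ 0 + L ^ (1 - p) * ‖g w‖ ^ p := by
    intro w hw
    have h1 := hmax' w (ball_subset_closedBall (hsub hw))
    rw [mem_ball_iff_norm] at hw
    have h2 := norm_add_le (w - w0) (w0 - c)
    simp only [sub_add_sub_cancel] at h2
    have h3 : d / 2 ≤ R - ‖w - c‖ := by linarith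
    have h4 : ‖g w‖ ^ p * (d / 2) ^ 2 ≤ A ^ p * d ^ 2 := by
      refine le_trans ?_ h1
      gcongr
    have h5 : ‖g w‖ ^ p ≤ L ^ p := by
      rw [hLp]
      have : 0 < d ^ 2 := by positivity
      by_contra! hcon
      nlinarith
    have h6 : ‖g w‖ ≤ L := (Real.rpow_le_rpow_iff (norm_nonneg _) hLpos.le hp0).1 h5
    rcases (norm_nonneg (g w)).eq_or_lt with h0 | h0
    · rw [← h0]; positivity
    rw [zero_add]
    calc ‖g w‖ = ‖g w‖ ^ (1 - p) * ‖g w‖ ^ p := by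
          rw [← Real.rpow_add h0]; simp
      _ ≤ _ := by
        gcongr
  have h1 := aux_lint_bound g w0 (d / 2) I p 0 (L ^ (1 - p)) (by positivity) hI le_rfl
    (by positivity) hle ((lintegral_mono_set hsub).trans h)
  have h2 := aux_mean_real g w0 (d / 2) _ (by positivity) (by positivity)
    (hg.mono (hsub.trans ball_subset_closedBall)) h1
  rw [zero_mul, zero_add, hL, Real.mul_rpow (by positivity) hA0] at h2
  have h3 : A ^ (p - 1) * (A * (Real.pi * (d / 2) ^ 2)) ≤
    A ^ (p - 1) * ((4 ^ (1 / p)) ^ (1 - p) * A ^ (1 - p) * I) := by gcongr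
  have h4 : A ^ (p - 1) * A = A ^ p := by
    rw [← Real.rpow_add_one hApos.ne']; congr 1; ring
  have h5 : A ^ (p - 1) * A ^ (1 - p) = 1 := by
    rw [← Real.rpow_add hApos]; simp
  have h6 : A ^ p * (Real.pi * (d / 2) ^ 2) ≤ (4 ^ (1 / p)) ^ (1 - p) * I := by
    calc _ = A ^ (p - 1) * (A * (Real.pi * (d / 2) ^ 2)) := by rw [← h4]; ring
      _ ≤ _ := h3
      _ = (A ^ (p - 1) * A ^ (1 - p)) * ((4 ^ (1 / p)) ^ (1 - p) * I) := by ring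
      _ = _ := by rw [h5, one_mul]
  have h7 : 0 ≤ A ^ p * d ^ 2 := by positivity
  nlinarith [Real.pi_gt_three]

lemma aux_sub (p : ℝ) (hp : 0 < p) : ∃ K : ℝ, 0 < K ∧ ∀ (g : ℂ → ℂ) (c : ℂ) (R I : ℝ), 0 < R →
    0 ≤ I → DifferentiableOn ℂ g (closedBall c R) →
    ∫⁻ w in ball c R, ENNReal.ofReal (‖g w‖ ^ p) ≤ ENNReal.ofReal I →
    ‖g c‖ ^ p * R ^ 2 ≤ K * I := by
  rcases le_or_gt 1 p with h | h
  · exact ⟨2 ^ p, by positivity, fun g c R I hR hI hg hh =>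
      aux_sub_ge p h g c R I hR hI (hg.mono ball_subset_closedBall) hh⟩
  · exact ⟨4 * (4 ^ (1 / p)) ^ (1 - p), by positivity, fun g c R I hR hI hg hh =>
      aux_sub_lt p hp h g c R I hR hI hg hh⟩

lemma aux_lint_eq (p α : ℝ) (f : ℂ → ℂ) : dirichletLintegral p α f =
    ENNReal.ofReal (Real.pi)⁻¹ *
      ∫⁻ z in unitDisk, ENNReal.ofReal (‖deriv f z‖ ^ p * (1 - ‖z‖ ^ 2) ^ α) := by
  unfold dirichletLintegral areaMeasure
  rw [Measure.restrict_smul, lintegral_smul_measure, smul_eq_mul]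

lemma aux_norm_le (p α : ℝ) (hp : 0 < p) (f : ℂ → ℂ) (hf : MemDirichlet p α f)
    (hn : dirichletNorm p α f ≤ 1) :
    ‖f 0‖ ≤ 1 ∧ ∫⁻ z in unitDisk, ENNReal.ofReal (‖deriv f z‖ ^ p * (1 - ‖z‖ ^ 2) ^ α) ≤
      ENNReal.ofReal Real.pi := by
  have h1 : ‖f 0‖ ^ p + (dirichletLintegral p α f).toReal ≤ 1 := by
    by_contra! hcon
    have := Real.one_lt_rpow hcon (show 0 < 1 / p by positivity)
    unfold dirichletNorm at hn
    linarith
  have h2 : 0 ≤ (dirichletLintegral p α f).toReal := ENNReal.toReal_nonneg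
  have h3 : 0 ≤ ‖f 0‖ ^ p := by positivity
  constructor
  · by_contra! hcon
    have := Real.one_lt_rpow hcon hp
    linarith
  · have h4 : dirichletLintegral p α f ≤ 1 := by
      rw [← ENNReal.ofReal_toReal hf.2.ne, ← ENNReal.ofReal_one]
      exact ENNReal.ofReal_le_ofReal (by linarith)
    rw [aux_lint_eq] at h4
    set X := ∫⁻ z in unitDisk, ENNReal.ofReal (‖deriv f z‖ ^ p * (1 - ‖z‖ ^ 2) ^ α)
    calc X = ENNReal.ofReal Real.pi * (ENNReal.ofReal (Real.pi)⁻¹ * X) := by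
          rw [← mul_assoc, ← ENNReal.ofReal_mul Real.pi_pos.le, mul_inv_cancel₀ Real.pi_ne_zero]
          simp
      _ ≤ ENNReal.ofReal Real.pi * 1 := by gcongr
      _ = _ := mul_one _

lemma aux_weight (α : ℝ) : ∃ k : ℝ, 0 < k ∧ ∀ d t : ℝ, 0 < d → d / 2 ≤ t → t ≤ 3 * d →
    k * d ^ α ≤ t ^ α := by
  refine ⟨min ((1 / 2) ^ α) (3 ^ α), by positivity, ?_⟩
  intro d t hd h1 h2
  rcases le_total 0 α with h | h
  · calc _ ≤ (1 / 2) ^ α * d ^ α := by gcongr; exact min_le_left _ _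
      _ = (1 / 2 * d) ^ α := by rw [Real.mul_rpow (by norm_num) hd.le]
      _ ≤ _ := Real.rpow_le_rpow (by positivity) (by linarith) h
  · calc _ ≤ 3 ^ α * d ^ α := by gcongr; exact min_le_right _ _
      _ = (3 * d) ^ α := by rw [Real.mul_rpow (by norm_num) hd.le]
      _ ≤ _ := Real.rpow_le_rpow_of_nonpos (by linarith) h2 h

lemma aux_deriv (p α : ℝ) (hp : 0 < p) : ∃ N : ℝ, 0 < N ∧ ∀ f : ℂ → ℂ, MemDirichlet p α f →
    dirichletNorm p α f ≤ 1 → ∀ w ∈ unitDisk,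
    ‖deriv f w‖ ≤ N * (1 - ‖w‖) ^ (-((α + 2) / p)) := by
  obtain ⟨K, hK, hsub⟩ := aux_sub p hp
  obtain ⟨k, hk, hwt⟩ := aux_weight α
  refine ⟨(4 * (K * (k⁻¹ * Real.pi))) ^ (1 / p), by have := Real.pi_pos; positivity, ?_⟩
  intro f hf hn w hw
  obtain ⟨-, hI⟩ := aux_norm_le p α hp f hf hn
  have hw1 : ‖w‖ < 1 := by simpa [unitDisk] using hw
  set d := 1 - ‖w‖ with hd
  have hd0 : 0 < d := by linarith
  have hball : closedBall w (d / 2) ⊆ unitDisk := by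
    intro z hz
    rw [mem_closedBall_iff_norm] at hz
    have := norm_add_le (z - w) w
    simp only [sub_add_cancel] at this
    simp only [unitDisk, mem_ball_zero_iff]
    linarith
  have hder : DifferentiableOn ℂ (deriv f) (closedBall w (d / 2)) :=
    (hf.1.deriv isOpen_ball).mono hball
  have hint : ∫⁻ z in ball w (d / 2), ENNReal.ofReal (‖deriv f z‖ ^ p) ≤
      ENNReal.ofReal ((k * d ^ α)⁻¹ * Real.pi) := by
    calc ∫⁻ z in ball w (d / 2), ENNReal.ofReal (‖deriv f z‖ ^ p)
        ≤ ∫⁻ z in ball w (d / 2), ENNReal.ofReal (k * d ^ α)⁻¹ *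
            ENNReal.ofReal (‖deriv f z‖ ^ p * (1 - ‖z‖ ^ 2) ^ α) := by
          apply setLIntegral_mono' measurableSet_ball
          intro z hz
          rw [← ENNReal.ofReal_mul (by positivity)]
          apply ENNReal.ofReal_le_ofReal
          rw [mem_ball_iff_norm] at hz
          have t1 := norm_add_le (z - w) w
          simp only [sub_add_cancel] at t1
          have t2 := norm_sub_norm_le w z
          rw [norm_sub_rev] at t2
          have h1 := hwt d (1 - ‖z‖ ^ 2) hd0 (by nlinarith [norm_nonneg z])
            (by nlinarith [norm_nonneg z])
          have h2 : 0 < k * d ^ α := by positivity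
          have h3 : 0 ≤ ‖deriv f z‖ ^ p := by positivity
          rw [inv_mul_eq_div, le_div_iff₀ h2]
          gcongr
      _ = ENNReal.ofReal (k * d ^ α)⁻¹ * ∫⁻ z in ball w (d / 2),
            ENNReal.ofReal (‖deriv f z‖ ^ p * (1 - ‖z‖ ^ 2) ^ α) :=
          lintegral_const_mul' _ _ ENNReal.ofReal_ne_top
      _ ≤ ENNReal.ofReal (k * d ^ α)⁻¹ * ENNReal.ofReal Real.pi := by
          gcongr
          exact (lintegral_mono_set (ball_subset_closedBall.trans hball)).trans hI
      _ = _ := by rw [← ENNReal.ofReal_mul (by positivity)]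
  have h1 := hsub (deriv f) w (d / 2) _ (by positivity)
    (by have := Real.pi_pos; positivity) hder hint
  have hpi := Real.pi_pos
  have h2 : ‖deriv f w‖ ^ p ≤ 4 * (K * (k⁻¹ * Real.pi)) * d ^ (-(α + 2)) := by
    have e1 : d ^ (-(α + 2)) = (d ^ α)⁻¹ * (d ^ 2)⁻¹ := by
      rw [Real.rpow_neg hd0.le, Real.rpow_add hd0, mul_inv]; norm_num
    have e2 : 0 < d ^ 2 := by positivity
    have e3 : ‖deriv f w‖ ^ p * d ^ 2 ≤ 4 * (K * (k⁻¹ * Real.pi)) * (d ^ α)⁻¹ := by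
      rw [mul_inv] at h1
      linarith
    rw [e1, ← mul_assoc, ← div_eq_mul_inv, le_div_iff₀ e2]
    exact e3
  calc ‖deriv f w‖ = (‖deriv f w‖ ^ p) ^ (1 / p) := by
        rw [← Real.rpow_mul (norm_nonneg _), mul_one_div_cancel hp.ne', Real.rpow_one]
    _ ≤ (4 * (K * (k⁻¹ * Real.pi)) * d ^ (-(α + 2))) ^ (1 / p) := by gcongr
    _ = _ := by
      rw [Real.mul_rpow (by positivity) (by positivity), ← Real.rpow_mul hd0.le]
      congr 2
      ring

lemma aux_upper (p α : ℝ) (hp : 0 < p) (hpα : p < α + 2) :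
    ∃ C : ℝ, 0 < C ∧ ∀ f : ℂ → ℂ, MemDirichlet p α f →
    dirichletNorm p α f ≤ 1 → ∀ z ∈ unitDisk,
    ‖f z‖ ≤ C / (1 - ‖z‖ ^ 2) ^ ((α + 2 - p) / p) := by
  obtain ⟨N, hN, hder⟩ := aux_deriv p α hp
  set s := (α + 2 - p) / p with hs
  have hs0 : 0 < s := div_pos (by linarith) hp
  refine ⟨1 + N / s * 2 ^ s, by positivity, ?_⟩
  intro f hf hn z hz
  have hz1 : ‖z‖ < 1 := by simpa [unitDisk] using hz
  have h0 := (aux_norm_le p α hp f hf hn).1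
  have hin : ∀ t ∈ Icc (0:ℝ) 1, (t : ℂ) * z ∈ unitDisk ∧ 0 < 1 - t * ‖z‖ := by
    intro t ht
    have : t * ‖z‖ < 1 := by nlinarith [ht.1, ht.2, norm_nonneg z]
    simp only [unitDisk, mem_ball_zero_iff, norm_mul, Complex.norm_real, Real.norm_eq_abs,
      abs_of_nonneg ht.1]
    exact ⟨this, by linarith⟩
  have hfd : ∀ t ∈ Icc (0:ℝ) 1, HasDerivAt (fun t : ℝ => f (t * z)) (deriv f (t * z) * z) t := by
    intro t ht
    have h1 : HasDerivAt f (deriv f (t * z)) (t * z) :=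
      ((hf.1.differentiableAt (isOpen_ball.mem_nhds (hin t ht).1))).hasDerivAt
    have h2 : HasDerivAt (fun t : ℝ => (t : ℂ) * z) z t := by
      simpa using (Complex.ofRealCLM.hasDerivAt (x := t)).mul_const z
    exact h1.comp t h2
  have hBd : ∀ t ∈ Icc (0:ℝ) 1, HasDerivAt (fun t : ℝ => 1 + N / s * (1 - t * ‖z‖) ^ (-s))
      (N * ‖z‖ * (1 - t * ‖z‖) ^ (-s - 1)) t := by
    intro t ht
    have h1 : HasDerivAt (fun t : ℝ => 1 - t * ‖z‖) (-‖z‖) t := by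
      simpa using ((hasDerivAt_id t).mul_const ‖z‖).const_sub 1
    have h2 := ((h1.rpow_const (p := -s) (Or.inl (hin t ht).2.ne')).const_mul (N / s)).const_add 1
    convert! h2 using 1
    field_simp
  have key := image_norm_le_of_norm_deriv_right_le_deriv_boundary' (a := 0) (b := 1)
    (f := fun t : ℝ => f (t * z)) (f' := fun t => deriv f (t * z) * z)
    (fun t ht => (hfd t ht).continuousAt.continuousWithinAt)
    (fun t ht => (hfd t (Ico_subset_Icc_self ht)).hasDerivWithinAt)
    (B := fun t : ℝ => 1 + N / s * (1 - t * ‖z‖) ^ (-s))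
    (B' := fun t => N * ‖z‖ * (1 - t * ‖z‖) ^ (-s - 1))
    (by
      have : 0 < N / s := by positivity
      simp; linarith)
    (fun t ht => (hBd t ht).continuousAt.continuousWithinAt)
    (fun t ht => (hBd t (Ico_subset_Icc_self ht)).hasDerivWithinAt)
    (by
      intro t ht
      have ht' := Ico_subset_Icc_self ht
      have h1 := hder f hf hn _ (hin t ht').1
      have e : -((α + 2) / p) = -s - 1 := by rw [hs]; field_simp; ring
      rw [norm_mul, Complex.norm_real, Real.norm_eq_abs, abs_of_nonneg ht.1, e] at h1
      rw [norm_mul]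
      calc _ ≤ N * (1 - t * ‖z‖) ^ (-s - 1) * ‖z‖ := by gcongr
        _ = _ := by ring) (right_mem_Icc.2 zero_le_one)
  simp only [Complex.ofReal_one, one_mul] at key
  refine key.trans ?_
  have hzz : 0 < 1 - ‖z‖ ^ 2 := by nlinarith [norm_nonneg z]
  have hz2 : 0 < 1 - ‖z‖ := by linarith
  have a1 : 1 ≤ ((1 - ‖z‖ ^ 2) ^ s)⁻¹ := by
    apply (one_le_inv₀ (by positivity)).2
    apply Real.rpow_le_one hzz.le _ hs0.le
    nlinarith [norm_nonneg z]
  have a2 : (1 - ‖z‖) ^ (-s) ≤ 2 ^ s * ((1 - ‖z‖ ^ 2) ^ s)⁻¹ := by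
    have : (1 - ‖z‖ ^ 2) ^ s ≤ 2 ^ s * (1 - ‖z‖) ^ s := by
      rw [← Real.mul_rpow (by norm_num) hz2.le]
      apply Real.rpow_le_rpow hzz.le _ hs0.le
      nlinarith [norm_nonneg z]
    rw [Real.rpow_neg hz2.le, ← div_eq_mul_inv, le_div_iff₀ (by positivity),
      inv_mul_le_iff₀ (by positivity)]
    linarith
  calc _ ≤ ((1 - ‖z‖ ^ 2) ^ s)⁻¹ + N / s * (2 ^ s * ((1 - ‖z‖ ^ 2) ^ s)⁻¹) := by gcongr
    _ = _ := by rw [div_eq_mul_inv _ ((1 - ‖z‖ ^ 2) ^ s)]; ring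

lemma aux_base (α : ℝ) (hα : -1 < α) : ∃ K : ℝ, 0 ≤ K ∧
    ∫⁻ z in unitDisk, ENNReal.ofReal ((1 - ‖z‖ ^ 2) ^ α) ≤ ENNReal.ofReal K := by
  have hα1 : 0 < α + 1 := by linarith
  have h1 : IntegrableOn (fun y : ℝ => y * (1 - y ^ 2) ^ α) (Ioc 0 1) := by
    apply intervalIntegral.integrableOn_deriv_of_nonneg
      (g := fun y : ℝ => -((1 - y ^ 2) ^ (α + 1) / (2 * (α + 1))))
    · apply ContinuousOn.neg
      apply ContinuousOn.div_const
      exact ContinuousOn.rpow_const (by fun_prop) (fun _ _ => Or.inr hα1.le)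
    · intro x hx
      have hx1 : 0 < 1 - x ^ 2 := by nlinarith [hx.1, hx.2]
      have d1 : HasDerivAt (fun y : ℝ => 1 - y ^ 2) (-(2 * x)) x := by
        simpa using ((hasDerivAt_id x).pow 2).const_sub 1
      have d2 := ((d1.rpow_const (p := α + 1) (Or.inl hx1.ne')).div_const (2 * (α + 1))).neg
      convert! d2 using 1
      simp only [add_sub_cancel_right]
      field_simp
    · intro x hx
      have hx1 : 0 < 1 - x ^ 2 := by nlinarith [hx.1, hx.2]
      have := hx.1
      positivity
  have h2 : IntegrableOn (fun z : ℂ => (1 - ‖z‖ ^ 2) ^ α) (ball (0:ℂ) 1) volume := by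
    have := (integrableOn_fun_norm_addHaar (E := ℂ) volume
      (f := fun y : ℝ => (1 - y ^ 2) ^ α) (r := 1)).2 (by
        simp only [Complex.finrank_real_complex, smul_eq_mul]
        norm_num
        exact h1.mono_set Ioo_subset_Ioc_self)
    exact this
  refine ⟨(∫⁻ z in unitDisk, ENNReal.ofReal ((1 - ‖z‖ ^ 2) ^ α)).toReal,
    ENNReal.toReal_nonneg, ?_⟩
  rw [ENNReal.ofReal_toReal]
  exact (Integrable.lintegral_lt_top h2).ne

lemma aux_id (a w : ℂ) : ‖1 - starRingEnd ℂ a * w‖ ^ 2 - ‖w - a‖ ^ 2 =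
    (1 - ‖a‖ ^ 2) * (1 - ‖w‖ ^ 2) := by
  simp only [← Complex.normSq_eq_norm_sq, Complex.normSq_apply]
  simp
  ring

lemma aux_re (a w : ℂ) (ha : ‖a‖ < 1) (hw : ‖w‖ < 1) :
    0 < (1 - starRingEnd ℂ a * w).re := by
  have h1 : (starRingEnd ℂ a * w).re ≤ ‖starRingEnd ℂ a * w‖ := Complex.re_le_norm _
  rw [norm_mul, Complex.norm_conj] at h1
  simp only [Complex.sub_re, Complex.one_re]
  nlinarith [norm_nonneg a, norm_nonneg w]

lemma aux_cov (α K : ℝ) 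
    (hK : ∫⁻ z in unitDisk, ENNReal.ofReal ((1 - ‖z‖ ^ 2) ^ α) ≤ ENNReal.ofReal K)
    (a : ℂ) (ha : ‖a‖ < 1) :
    ∫⁻ w in unitDisk, ENNReal.ofReal (((1 - ‖a‖ ^ 2) ^ 2 / ‖1 - starRingEnd ℂ a * w‖ ^ 4) *
      ((1 - ‖a‖ ^ 2) * (1 - ‖w‖ ^ 2) / ‖1 - starRingEnd ℂ a * w‖ ^ 2) ^ α) ≤ ENNReal.ofReal K := by
  set φ : ℂ → ℂ := fun w => (w - a) / (1 - starRingEnd ℂ a * w) with hφ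
  have hne : ∀ w ∈ unitDisk, 1 - starRingEnd ℂ a * w ≠ 0 := by
    intro w hw h
    have := aux_re a w ha (by simpa [unitDisk] using hw)
    rw [h] at this
    simp at this
  have hda : 0 < 1 - ‖a‖ ^ 2 := by nlinarith [norm_nonneg a]
  have haa : starRingEnd ℂ a * a = ((‖a‖ ^ 2 : ℝ) : ℂ) := by
    rw [mul_comm, Complex.mul_conj, Complex.normSq_eq_norm_sq]
  have hone : ∀ w ∈ unitDisk, 1 - ‖φ w‖ ^ 2 =
      (1 - ‖a‖ ^ 2) * (1 - ‖w‖ ^ 2) / ‖1 - starRingEnd ℂ a * w‖ ^ 2 := by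
    intro w hw
    have h1 : ‖1 - starRingEnd ℂ a * w‖ ≠ 0 := norm_ne_zero_iff.2 (hne w hw)
    rw [← aux_id, hφ]
    simp only [norm_div]
    rw [sub_div, div_self (pow_ne_zero 2 h1), div_pow]
  have hmaps : φ '' unitDisk ⊆ unitDisk := by
    rintro _ ⟨w, hw, rfl⟩
    have h1 := hone w hw
    have h2 := norm_pos_iff.2 (hne w hw)
    have hw1 : ‖w‖ < 1 := by simpa [unitDisk] using hw
    have h3 : 0 < 1 - ‖w‖ ^ 2 := by nlinarith [norm_nonneg w]
    have h4 : 0 < 1 - ‖φ w‖ ^ 2 := by rw [h1]; positivity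
    simp only [unitDisk, mem_ball_zero_iff]
    nlinarith [norm_nonneg (φ w)]
  have hinj : InjOn φ unitDisk := by
    intro w hw v hv h
    simp only [hφ] at h
    rw [div_eq_div_iff (hne w hw) (hne v hv)] at h
    have h1 : (w - v) * (1 - starRingEnd ℂ a * a) = 0 := by linear_combination h
    rw [haa] at h1
    rcases mul_eq_zero.1 h1 with h2 | h2
    · exact sub_eq_zero.1 h2
    · exfalso
      have : ((1 - ‖a‖ ^ 2 : ℝ) : ℂ) = 0 := by push_cast at h2 ⊢; exact h2
      exact hda.ne' (by exact_mod_cast this)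
  have hderiv : ∀ w ∈ unitDisk, HasDerivAt φ
      (((1 - ‖a‖ ^ 2 : ℝ) : ℂ) / (1 - starRingEnd ℂ a * w) ^ 2) w := by
    intro w hw
    have d1 : HasDerivAt (fun w => w - a) 1 w := (hasDerivAt_id w).sub_const a
    have d2 : HasDerivAt (fun w => 1 - starRingEnd ℂ a * w) (-starRingEnd ℂ a) w := by
      simpa using ((hasDerivAt_id w).const_mul (starRingEnd ℂ a)).const_sub 1
    have d3 := d1.div d2 (hne w hw)
    convert! d3 using 2
    push_cast
    have := haa
    push_cast at this
    rw [← this]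
    ring
  have hcv := lintegral_image_eq_lintegral_abs_det_fderiv_mul (volume : Measure ℂ)
    (s := unitDisk) measurableSet_ball
    (fun w hw => ((hderiv w hw).hasFDerivAt.restrictScalars ℝ).hasFDerivWithinAt) hinj
    (fun z => ENNReal.ofReal ((1 - ‖z‖ ^ 2) ^ α))
  have hle := (lintegral_mono_set (μ := volume)
    (f := fun z => ENNReal.ofReal ((1 - ‖z‖ ^ 2) ^ α)) hmaps).trans hK
  rw [hcv] at hle
  refine le_trans (le_of_eq ?_) hle
  apply setLIntegral_congr_fun measurableSet_ball
  intro w hw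
  simp only
  rw [hone w hw, ENNReal.ofReal_mul (by positivity)]
  congr 2
  simp [ContinuousLinearMap.det, LinearMap.det_restrictScalars,
      Algebra.norm_complex_eq, Complex.normSq_eq_norm_sq]
  rw [← Complex.ofReal_pow, ← Complex.ofReal_one, ← Complex.ofReal_sub, Complex.norm_real]
  rw [Real.norm_eq_abs, sq_abs, abs_of_nonneg (by positivity)]
  ring

lemma aux_lower (p α : ℝ) (hα : -1 < α) (hp : 0 < p) (hpα : p < α + 2) :
    ∃ c : ℝ, 0 < c ∧ ∀ a ∈ unitDisk, ∃ f : ℂ → ℂ, MemDirichlet p α f ∧ dirichletNorm p α f ≤ 1 ∧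
      c / (1 - ‖a‖ ^ 2) ^ ((α + 2 - p) / p) = ‖f a‖ := by
  obtain ⟨K, hK0, hK⟩ := aux_base α hα
  have hpi := Real.pi_pos
  set q : ℝ := 2 * (α + 2) / p - 1 with hq
  have hq0 : 0 < q := by
    have : 1 < 2 * (α + 2) / p := by rw [lt_div_iff₀ hp]; linarith
    linarith
  set T : ℝ := 1 + Real.pi⁻¹ * (q ^ p * K) with hT
  have hT0 : 0 < T := by positivity
  set c : ℝ := T ^ (-(1 / p)) with hc
  have hc0 : 0 < c := by positivity
  have hcp : c ^ p = T⁻¹ := by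
    rw [hc, ← Real.rpow_mul hT0.le, ← Real.rpow_neg_one]
    congr 1
    field_simp
  refine ⟨c, hc0, ?_⟩
  intro a ha
  have ha1 : ‖a‖ < 1 := by simpa [unitDisk] using ha
  set δ : ℝ := 1 - ‖a‖ ^ 2 with hδ
  have hδ0 : 0 < δ := by nlinarith [norm_nonneg a]
  have hδ1 : δ ≤ 1 := by nlinarith [norm_nonneg a]
  set m : ℝ := (α + 2) / p with hm
  have hm0 : 0 < m := div_pos (by linarith) hp
  set B : ℝ := c * δ ^ m with hB
  have hB0 : 0 < B := by positivity
  set F : ℂ → ℂ := fun w => (B : ℂ) * (1 - starRingEnd ℂ a * w) ^ ((-q : ℝ) : ℂ) with hF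
  have hre : ∀ w ∈ unitDisk, 0 < (1 - starRingEnd ℂ a * w).re :=
    fun w hw => aux_re a w ha1 (by simpa [unitDisk] using hw)
  have hd : ∀ w ∈ unitDisk, HasDerivAt F ((B : ℂ) * (((-q : ℝ) : ℂ) *
      (1 - starRingEnd ℂ a * w) ^ (((-q : ℝ) : ℂ) - 1) * (-starRingEnd ℂ a))) w := by
    intro w hw
    have d2 : HasDerivAt (fun w => 1 - starRingEnd ℂ a * w) (-starRingEnd ℂ a) w := by
      simpa using ((hasDerivAt_id w).const_mul (starRingEnd ℂ a)).const_sub 1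
    exact (d2.cpow_const (Or.inl (hre w hw))).const_mul _
  have hpt : ∀ w ∈ unitDisk, ‖deriv F w‖ ^ p * (1 - ‖w‖ ^ 2) ^ α ≤ (c ^ p * q ^ p) *
      ((δ ^ 2 / ‖1 - starRingEnd ℂ a * w‖ ^ 4) *
      (δ * (1 - ‖w‖ ^ 2) / ‖1 - starRingEnd ℂ a * w‖ ^ 2) ^ α) := by
    intro w hw
    have hw1 : ‖w‖ < 1 := by simpa [unitDisk] using hw
    have h3 : 0 < 1 - ‖w‖ ^ 2 := by nlinarith [norm_nonneg w]
    set x := ‖1 - starRingEnd ℂ a * w‖ with hx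
    have hx0 : 0 < x := by
      rw [hx, norm_pos_iff]; intro h; have := hre w hw; rw [h] at this; simp at this
    have e1 : ((-q : ℝ) : ℂ) - 1 = ((-q - 1 : ℝ) : ℂ) := by push_cast; ring
    have h4 : ‖deriv F w‖ ≤ B * (q * x ^ (-q - 1)) := by
      rw [(hd w hw).deriv, e1, norm_mul, norm_mul, norm_mul, Complex.norm_cpow_real, norm_neg,
        Complex.norm_conj, Complex.norm_real, Complex.norm_real, Real.norm_of_nonneg hB0.le,
        norm_neg, Real.norm_of_nonneg hq0.le]
      have : 0 ≤ B * (q * x ^ (-q - 1)) := by positivity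
      nlinarith
    calc ‖deriv F w‖ ^ p * (1 - ‖w‖ ^ 2) ^ α
        ≤ (B * (q * x ^ (-q - 1))) ^ p * (1 - ‖w‖ ^ 2) ^ α := by gcongr
      _ = _ := by
        rw [Real.mul_rpow (by positivity) (by positivity), Real.mul_rpow hq0.le (by positivity), hB,
          Real.mul_rpow hc0.le (by positivity), ← Real.rpow_mul hδ0.le, ← Real.rpow_mul hx0.le,
          Real.div_rpow (by positivity) (by positivity), Real.mul_rpow hδ0.le h3.le]
        have e2 : m * p = α + 2 := by rw [hm]; field_simp
        have e3 : (-q - 1) * p = -(2 * α + 4) := by rw [hq]; field_simp; ring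
        have e4 : δ ^ (α + 2) = δ ^ α * δ ^ 2 := by rw [Real.rpow_add hδ0]; norm_num
        have e5 : x ^ (2 * α + 4) = (x ^ 2) ^ α * x ^ 4 := by
          rw [Real.rpow_add hx0, Real.rpow_mul hx0.le]; norm_num
        rw [e2, e3, e4, Real.rpow_neg hx0.le, e5]
        field_simp
  have hL : dirichletLintegral p α F ≤ ENNReal.ofReal (c ^ p * (Real.pi⁻¹ * (q ^ p * K))) := by
    rw [aux_lint_eq]
    calc _ ≤ ENNReal.ofReal Real.pi⁻¹ * ∫⁻ w in unitDisk, ENNReal.ofReal (c ^ p * q ^ p) *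
          ENNReal.ofReal ((δ ^ 2 / ‖1 - starRingEnd ℂ a * w‖ ^ 4) *
          (δ * (1 - ‖w‖ ^ 2) / ‖1 - starRingEnd ℂ a * w‖ ^ 2) ^ α) := by
            gcongr 1
            apply setLIntegral_mono' measurableSet_ball
            intro w hw
            rw [← ENNReal.ofReal_mul (by positivity)]
            exact ENNReal.ofReal_le_ofReal (hpt w hw)
      _ ≤ ENNReal.ofReal Real.pi⁻¹ * (ENNReal.ofReal (c ^ p * q ^ p) * ENNReal.ofReal K) := by
            rw [lintegral_const_mul' _ _ ENNReal.ofReal_ne_top]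
            gcongr
            exact aux_cov α K hK a ha1
      _ = _ := by
            rw [← ENNReal.ofReal_mul (by positivity), ← ENNReal.ofReal_mul (by positivity)]
            congr 1
            ring
  refine ⟨F, ⟨fun w hw => (hd w hw).differentiableAt.differentiableWithinAt,
    hL.trans_lt ENNReal.ofReal_lt_top⟩, ?_, ?_⟩
  · unfold dirichletNorm
    apply Real.rpow_le_one (by positivity) _ (by positivity)
    have h1 : ‖F 0‖ = B := by
      simp [hF, abs_of_pos hB0]
    have h2 : B ≤ c := by
      have : δ ^ m ≤ 1 := Real.rpow_le_one hδ0.le hδ1 hm0.le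
      rw [hB]; nlinarith
    have h3 : ‖F 0‖ ^ p ≤ c ^ p := by rw [h1]; gcongr
    have h4 := ENNReal.toReal_le_of_le_ofReal (by positivity) hL
    have h5 : c ^ p + c ^ p * (Real.pi⁻¹ * (q ^ p * K)) = 1 := by
      rw [hcp]
      have : T⁻¹ * T = 1 := inv_mul_cancel₀ hT0.ne'
      rw [hT] at this ⊢
      linarith
    linarith
  · have h1 : 1 - starRingEnd ℂ a * a = ((δ : ℝ) : ℂ) := by
      rw [mul_comm, Complex.mul_conj, Complex.normSq_eq_norm_sq, hδ]; push_cast; ring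
    simp only [hF]
    rw [h1, norm_mul, Complex.norm_cpow_real, Complex.norm_real, Complex.norm_real,
      Real.norm_of_nonneg hB0.le, Real.norm_of_nonneg hδ0.le, hB, mul_assoc, ← Real.rpow_add hδ0,
      div_eq_mul_inv, ← Real.rpow_neg hδ0.le]
    congr 2
    rw [hm, hq]
    field_simp
    ring

/-- Lemma 2.1(1): for `p < α + 2`, the point evaluation functional on `D^p_α` satisfies
`‖δ_z‖ ≍ (1-|z|²)^{-(α+2-p)/p}`. -/
theorem pointEval_dirichlet_subcritical (p α : ℝ) (hα : -1 < α) (hp : 0 < p)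
    (hpα : p < α + 2) :
    ∃ c C : ℝ, 0 < c ∧ 0 < C ∧ ∀ z ∈ unitDisk,
      c / (1 - ‖z‖ ^ 2) ^ ((α + 2 - p) / p) ≤
        sSup {r : ℝ | ∃ f : ℂ → ℂ, MemDirichlet p α f ∧ dirichletNorm p α f ≤ 1 ∧ r = ‖f z‖} ∧
      sSup {r : ℝ | ∃ f : ℂ → ℂ, MemDirichlet p α f ∧ dirichletNorm p α f ≤ 1 ∧ r = ‖f z‖} ≤
        C / (1 - ‖z‖ ^ 2) ^ ((α + 2 - p) / p) := by
  obtain ⟨C, hC, hup⟩ := aux_upper p α hp hpα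
  obtain ⟨c, hc, hlow⟩ := aux_lower p α hα hp hpα
  refine ⟨c, C, hc, hC, fun z hz => ?_⟩
  have hz1 : ‖z‖ < 1 := by simpa [unitDisk] using hz
  have hzz : 0 < 1 - ‖z‖ ^ 2 := by nlinarith [norm_nonneg z]
  constructor
  · apply le_csSup
    · refine ⟨C / (1 - ‖z‖ ^ 2) ^ ((α + 2 - p) / p), ?_⟩
      rintro r ⟨f, hf, hn, rfl⟩
      exact hup f hf hn z hz
    · exact hlow z hz
  · apply Real.sSup_le
    · rintro r ⟨f, hf, hn, rfl⟩
      exact hup f hf hn z hz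
    · positivity
end
end

section
/- Let α > -1 and 0 < p < ∞ with p > α + 2. Then the norm of the point evaluation functional δ_z on the weighted Dirichlet space D^p_α is comparable to 1 uniformly in z: there exist constants c, C > 0 independent of z ∈ 𝔻 such that c ≤ sup{|f(z)| : f ∈ D^p_α, ‖f‖_{D^p_α} ≤ 1} ≤ C for all z ∈ 𝔻. -/
open MeasureTheory Metric Set Filter Topology ENNReal

noncomputable section

theorem circ_bound {g : ℂ → ℂ} {w : ℂ} {R r : ℝ} (hg : DifferentiableOn ℂ g (ball w R))
    (h0 : 0 < r) (hr : r < R) :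
    ENNReal.ofReal (2 * Real.pi) * ‖g w‖ₑ ≤
      ∫⁻ θ in Ioo (-Real.pi) Real.pi, ‖g (w + Complex.polarCoord.symm (r, θ))‖ₑ := by
  have hsub : closedBall w |r| ⊆ ball w R := by
    rw [abs_of_pos h0]; exact closedBall_subset_ball hr
  have h1 : Real.circleAverage g w r = g w := by
    apply circleAverage_of_differentiable_on_off_countable (s := ∅) countable_empty
    · exact hg.continuousOn.mono hsub
    · intro z hz
      exact hg.differentiableAt (isOpen_ball.mem_nhds (hsub (ball_subset_closedBall hz.1)))
  rw [Real.circleAverage_eq_integral_add (-Real.pi)] at h1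
  rw [intervalIntegral.integral_comp_add_right (fun θ ↦ g (circleMap w r θ))] at h1
  have e1 : (0 : ℝ) + -Real.pi = -Real.pi := by ring
  have e2 : 2 * Real.pi + -Real.pi = Real.pi := by ring
  rw [e1, e2, intervalIntegral.integral_of_le (by linarith [Real.pi_pos]),
    integral_Ioc_eq_integral_Ioo] at h1
  have h2 : (2 * Real.pi : ℝ) • g w = ∫ θ in Ioo (-Real.pi) Real.pi, g (circleMap w r θ) := by
    rw [← h1, smul_inv_smul₀]
    positivity
  have h3 : ENNReal.ofReal (2 * Real.pi) * ‖g w‖ₑ = ‖(2 * Real.pi : ℝ) • g w‖ₑ := by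
    rw [enorm_smul, Real.enorm_of_nonneg (by positivity)]
  rw [h3, h2]
  refine (enorm_integral_le_lintegral_enorm _).trans (le_of_eq ?_)
  refine lintegral_congr fun θ => ?_
  simp only [circleMap, Complex.polarCoord_symm_apply, Complex.exp_mul_I]
  push_cast
  rfl

theorem area_bound {g : ℂ → ℂ} {w : ℂ} {R : ℝ} (hR : 0 < R)
    (hg : DifferentiableOn ℂ g (ball w R)) :
    ENNReal.ofReal (Real.pi * R ^ 2) * ‖g w‖ₑ ≤ ∫⁻ z in ball w R, ‖g z‖ₑ := by
  classical
  set F : ℂ → ℝ≥0∞ := (ball w R).indicator (fun z => ‖g z‖ₑ) with hF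
  have hFm : Measurable F := by
    have hc : ContinuousOn (fun z => ‖g z‖ₑ) (ball w R) := hg.continuousOn.enorm
    rw [hF, ← Set.piecewise_eq_indicator]
    exact hc.measurable_piecewise continuousOn_const measurableSet_ball
  have hpm : Measurable (fun p : ℝ × ℝ => Complex.polarCoord.symm p) := by
    have : (fun p : ℝ × ℝ => Complex.polarCoord.symm p) =
      fun p : ℝ × ℝ => (p.1 * (Real.cos p.2 + Real.sin p.2 * Complex.I) : ℂ) := by
      funext p; exact Complex.polarCoord_symm_apply p
    rw [this]; fun_prop
  have h1 : ∫⁻ z in ball w R, ‖g z‖ₑ = ∫⁻ z, F (w + z) := by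
    rw [lintegral_add_left_eq_self, hF, lintegral_indicator measurableSet_ball]
  rw [h1, ← Complex.lintegral_comp_polarCoord_symm, polarCoord_target,
    Measure.volume_eq_prod, setLIntegral_prod]
  rotate_left
  · simp only [smul_eq_mul]
    have : Measurable fun p : ℝ × ℝ => F (w + Complex.polarCoord.symm p) :=
      hFm.comp (hpm.const_add w)
    exact ((by fun_prop : Measurable fun p : ℝ × ℝ => ENNReal.ofReal p.1).mul this).aemeasurable
  calc ENNReal.ofReal (Real.pi * R ^ 2) * ‖g w‖ₑ
      = ∫⁻ r in Ioo 0 R, ENNReal.ofReal (2 * Real.pi * r) * ‖g w‖ₑ := by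
        rw [lintegral_mul_const _ (by fun_prop), ← ofReal_integral_eq_lintegral_ofReal]
        · rw [← integral_Ioc_eq_integral_Ioo, ← intervalIntegral.integral_of_le hR.le]
          have hI : ∫ r in (0 : ℝ)..R, 2 * Real.pi * r = Real.pi * R ^ 2 := by
            rw [intervalIntegral.integral_const_mul, integral_id]; ring
          rw [hI]
        · exact (Continuous.integrableOn_Icc (by fun_prop)).mono_set Ioo_subset_Icc_self
        · filter_upwards [ae_restrict_mem measurableSet_Ioo] with r hr
          have := hr.1
          have := Real.pi_pos
          change (0 : ℝ) ≤ 2 * Real.pi * r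
          positivity
    _ ≤ ∫⁻ r in Ioo 0 R, ∫⁻ θ in Ioo (-Real.pi) Real.pi,
          ENNReal.ofReal r • F (w + Complex.polarCoord.symm (r, θ)) := by
        refine setLIntegral_mono' measurableSet_Ioo fun r hr => ?_
        simp only [smul_eq_mul]
        rw [lintegral_const_mul' _ _ ENNReal.ofReal_ne_top]
        have hE : ∫⁻ θ in Ioo (-Real.pi) Real.pi, F (w + Complex.polarCoord.symm (r, θ)) =
          ∫⁻ θ in Ioo (-Real.pi) Real.pi, ‖g (w + Complex.polarCoord.symm (r, θ))‖ₑ := by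
          refine lintegral_congr fun θ => ?_
          rw [hF, indicator_of_mem]
          rw [mem_ball, dist_eq_norm, add_sub_cancel_left, Complex.norm_polarCoord_symm,
            abs_of_pos hr.1]
          exact hr.2
        rw [hE, mul_comm (2 * Real.pi), ENNReal.ofReal_mul hr.1.le, mul_assoc]
        gcongr
        exact circ_bound hg hr.1 hr.2
    _ ≤ _ := lintegral_mono_set Ioo_subset_Ioi_self

theorem area_bound_p {g : ℂ → ℂ} {w : ℂ} {R p : ℝ} (hR : 0 < R) (hp : 1 < p)
    (hg : DifferentiableOn ℂ g (ball w R)) :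
    ENNReal.ofReal (Real.pi * R ^ 2) * ‖g w‖ₑ ^ p ≤ ∫⁻ z in ball w R, ‖g z‖ₑ ^ p := by
  have hp0 : 0 < p := by linarith
  have hpq := Real.HolderConjugate.conjExponent hp
  set q := p.conjExponent
  have h1 := area_bound hR hg
  have hm : AEMeasurable (fun z => ‖g z‖ₑ) (volume.restrict (ball w R)) :=
    (hg.continuousOn.aemeasurable measurableSet_ball).enorm
  have h2 := ENNReal.lintegral_mul_le_Lp_mul_Lq (volume.restrict (ball w R)) hpq hm
    (aemeasurable_const (b := (1 : ℝ≥0∞)))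
  have hV : volume (ball w R) = ENNReal.ofReal (Real.pi * R ^ 2) := by
    rw [Complex.volume_ball, mul_comm, ENNReal.ofReal_mul Real.pi_pos.le,
      ENNReal.ofReal_pow hR.le]
    congr 1
    rw [← NNReal.coe_real_pi, ENNReal.ofReal_coe_nnreal]
  simp only [Pi.mul_apply, mul_one, ENNReal.one_rpow, lintegral_const, one_mul,
    Measure.restrict_apply_univ, hV] at h2
  set V := ENNReal.ofReal (Real.pi * R ^ 2) with hVd
  have hV0 : V ≠ 0 := by
    rw [hVd]; simp only [ne_eq, ENNReal.ofReal_eq_zero, not_le]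
    have := Real.pi_pos
    positivity
  have hVt : V ≠ ⊤ := ENNReal.ofReal_ne_top
  set I := ∫⁻ z in ball w R, ‖g z‖ₑ ^ p
  have h3 : V ^ p * ‖g w‖ₑ ^ p ≤ I * V ^ (p - 1) := by
    have := ENNReal.rpow_le_rpow (h1.trans h2) hp0.le
    rw [ENNReal.mul_rpow_of_nonneg _ _ hp0.le, ENNReal.mul_rpow_of_nonneg _ _ hp0.le,
      ← ENNReal.rpow_mul, ← ENNReal.rpow_mul, one_div_mul_cancel hp0.ne', ENNReal.rpow_one] at this
    have e : 1 / q * p = p - 1 := by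
      have hq := hpq.inv_add_inv_eq_one
      have : 1 / q = 1 - p⁻¹ := by rw [one_div]; linarith
      rw [this]; field_simp
    rwa [e] at this
  have h4 : V ^ p = V * V ^ (p - 1) := by
    conv_rhs => rw [← ENNReal.rpow_one V, ← ENNReal.rpow_mul, ← ENNReal.rpow_add _ _ hV0 hVt]
    congr 1; ring
  have h5 : V ^ (p - 1) ≠ 0 := by
    have := ENNReal.rpow_pos (p := p - 1) (pos_iff_ne_zero.2 hV0) hVt
    exact this.ne'
  have h6 : V ^ (p - 1) ≠ ⊤ := ENNReal.rpow_ne_top_of_nonneg (by linarith) hVt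
  rw [h4, mul_comm V, mul_assoc, mul_comm I] at h3
  exact (ENNReal.mul_le_mul_iff_right h5 h6).1 h3

theorem weight_bound {α d s : ℝ} (hd : 0 < d) (h1 : d / 2 ≤ s) (h2 : s ≤ 3 * d) :
    min ((1 / 2 : ℝ) ^ α) (3 ^ α) * d ^ α ≤ s ^ α := by
  rcases le_total 0 α with h | h
  · calc _ ≤ (1 / 2 : ℝ) ^ α * d ^ α := by gcongr; exact min_le_left _ _
      _ = (d / 2) ^ α := by
        rw [← Real.mul_rpow (by norm_num) hd.le]; congr 1; ring
      _ ≤ s ^ α := Real.rpow_le_rpow (by linarith) h1 h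
  · calc _ ≤ (3 : ℝ) ^ α * d ^ α := by gcongr; exact min_le_right _ _
      _ = (3 * d) ^ α := by
        rw [← Real.mul_rpow (by norm_num) hd.le]
      _ ≤ s ^ α := Real.rpow_le_rpow_of_nonpos (by linarith) h2 h

theorem lintegral_le_one {p α : ℝ} (hp : 0 < p) {f : ℂ → ℂ} (hf : MemDirichlet p α f)
    (hn : dirichletNorm p α f ≤ 1) : ‖f 0‖ ≤ 1 ∧ dirichletLintegral p α f ≤ 1 := by
  unfold dirichletNorm at hn
  have h0 : 0 ≤ ‖f 0‖ ^ p := by positivity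
  have h1 : 0 ≤ (dirichletLintegral p α f).toReal := ENNReal.toReal_nonneg
  have h2 : ‖f 0‖ ^ p + (dirichletLintegral p α f).toReal ≤ 1 := by
    by_contra! h
    exact absurd hn (not_le.2 (Real.one_lt_rpow h (by positivity)))
  constructor
  · by_contra! h
    have := Real.one_lt_rpow h hp
    linarith
  · have : (dirichletLintegral p α f).toReal ≤ (1 : ℝ≥0∞).toReal := by
      rw [ENNReal.toReal_one]; linarith
    exact (ENNReal.toReal_le_toReal hf.2.ne ENNReal.one_ne_top).1 this

theorem deriv_bound (p α : ℝ) (hp : 1 < p) :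
    ∃ K : ℝ, 0 < K ∧ ∀ f : ℂ → ℂ, MemDirichlet p α f → dirichletNorm p α f ≤ 1 →
      ∀ w : ℂ, ‖w‖ < 1 → ‖deriv f w‖ ≤ K * (1 - ‖w‖) ^ (-((α + 2) / p)) := by
  have hp0 : 0 < p := by linarith
  set c : ℝ := min ((1 / 2 : ℝ) ^ α) (3 ^ α) with hc
  have hc0 : 0 < c := lt_min (by positivity) (by positivity)
  refine ⟨(4 / c) ^ (1 / p), by positivity, fun f hf hn w hw => ?_⟩
  set d := 1 - ‖w‖ with hd
  have hd0 : 0 < d := by linarith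
  have hL := (lintegral_le_one hp0 hf hn).2
  have hsub : ball w (d / 2) ⊆ unitDisk := by
    unfold unitDisk
    apply ball_subset_ball'
    rw [dist_zero_right]; linarith
  have hg : DifferentiableOn ℂ (deriv f) (ball w (d / 2)) :=
    (hf.1.deriv isOpen_ball).mono hsub
  have h1 := area_bound_p (by positivity : 0 < d / 2) hp hg
  have hpi := Real.pi_pos
  have h2 : (∫⁻ z in ball w (d / 2), ‖deriv f z‖ₑ ^ p) * ENNReal.ofReal (c * d ^ α) ≤
      ENNReal.ofReal Real.pi := by
    rw [← lintegral_mul_const' _ _ ENNReal.ofReal_ne_top]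
    calc _ ≤ ∫⁻ z in ball w (d / 2),
            ENNReal.ofReal (‖deriv f z‖ ^ p * (1 - ‖z‖ ^ 2) ^ α) := by
          refine setLIntegral_mono' measurableSet_ball fun z hz => ?_
          rw [← ofReal_norm, ENNReal.ofReal_rpow_of_nonneg (norm_nonneg _) hp0.le,
            ← ENNReal.ofReal_mul (by positivity)]
          refine ENNReal.ofReal_le_ofReal ?_
          gcongr
          rw [mem_ball, dist_eq_norm] at hz
          have a1 : ‖z‖ ≤ ‖w‖ + d / 2 := by
            have := norm_sub_norm_le z w
            linarith
          have a2 : ‖w‖ - d / 2 ≤ ‖z‖ := by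
            have := norm_sub_norm_le w z
            rw [norm_sub_rev] at this
            linarith
          have a3 := norm_nonneg z
          apply weight_bound hd0 <;> nlinarith
      _ ≤ ∫⁻ z in unitDisk, ENNReal.ofReal (‖deriv f z‖ ^ p * (1 - ‖z‖ ^ 2) ^ α) :=
          lintegral_mono_set hsub
      _ = ENNReal.ofReal Real.pi * dirichletLintegral p α f := by
          unfold dirichletLintegral areaMeasure
          rw [Measure.restrict_smul, lintegral_smul_measure, smul_eq_mul, ← mul_assoc,
            ← ENNReal.ofReal_mul hpi.le, mul_inv_cancel₀ hpi.ne', ENNReal.ofReal_one, one_mul]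
      _ ≤ ENNReal.ofReal Real.pi * 1 := by gcongr
      _ = _ := mul_one _
  have h3 := (mul_le_mul_left h1 (ENNReal.ofReal (c * d ^ α))).trans h2
  rw [← ofReal_norm, ENNReal.ofReal_rpow_of_nonneg (norm_nonneg _) hp0.le,
    ← ENNReal.ofReal_mul (by positivity), ← ENNReal.ofReal_mul (by positivity),
    ENNReal.ofReal_le_ofReal_iff hpi.le] at h3
  have h4 : ‖deriv f w‖ ^ p ≤ 4 / c * d ^ (-(α + 2)) := by
    have e : d ^ (α + 2) = d ^ α * d ^ 2 := by
      rw [Real.rpow_add hd0]; norm_num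
    rw [Real.rpow_neg hd0.le, e, ← div_eq_mul_inv, div_div, le_div_iff₀ (by positivity)]
    have : Real.pi * (‖deriv f w‖ ^ p * (c * (d ^ α * d ^ 2))) ≤ Real.pi * 4 := by
      nlinarith
    exact le_of_mul_le_mul_left this hpi
  have h5 := Real.rpow_le_rpow (by positivity) h4 (by positivity : 0 ≤ 1 / p)
  rw [← Real.rpow_mul (norm_nonneg _), mul_one_div_cancel hp0.ne', Real.rpow_one,
    Real.mul_rpow (by positivity) (by positivity), ← Real.rpow_mul hd0.le] at h5
  convert h5 using 3
  ring

theorem eval_bound (p α : ℝ) (hp : 1 < p) (hpα : α + 2 < p) :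
    ∃ C : ℝ, 0 < C ∧ ∀ z ∈ unitDisk, ∀ f : ℂ → ℂ, MemDirichlet p α f →
      dirichletNorm p α f ≤ 1 → ‖f z‖ ≤ C := by
  obtain ⟨K, hK, hb⟩ := deriv_bound p α hp
  have hp0 : 0 < p := by linarith
  set γ : ℝ := 1 - (α + 2) / p with hγ
  have hγ0 : 0 < γ := by
    have : (α + 2) / p < 1 := by rw [div_lt_one hp0]; exact hpα
    linarith
  refine ⟨1 + K / γ, by positivity, fun z hz f hf hn => ?_⟩
  have hz1 : ‖z‖ < 1 := by simpa [unitDisk] using hz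
  have hmem : ∀ t ∈ Icc (0 : ℝ) 1, ‖(t : ℂ) * z‖ = t * ‖z‖ ∧ t * ‖z‖ < 1 := by
    intro t ht
    refine ⟨by rw [norm_mul, Complex.norm_real, Real.norm_of_nonneg ht.1], ?_⟩
    nlinarith [norm_nonneg z, ht.1, ht.2]
  have hD : ∀ t ∈ Icc (0 : ℝ) 1,
      HasDerivAt (fun t : ℝ => f (t * z)) (deriv f (t * z) * z) t := by
    intro t ht
    have h1 : HasDerivAt f (deriv f (t * z)) (t * z) := by
      apply DifferentiableAt.hasDerivAt
      apply hf.1.differentiableAt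
      apply isOpen_ball.mem_nhds
      rw [mem_ball, dist_zero_right, (hmem t ht).1]
      exact (hmem t ht).2
    have h2 : HasDerivAt (fun t : ℝ => (t : ℂ) * z) z t := by
      simpa using (Complex.ofRealCLM.hasDerivAt (x := t)).mul_const z
    exact h1.comp t h2
  have hB : ∀ t ∈ Icc (0 : ℝ) 1, HasDerivAt
      (fun t : ℝ => 1 + K / γ * (1 - (1 - t * ‖z‖) ^ γ))
      (K * (1 - t * ‖z‖) ^ (-((α + 2) / p)) * ‖z‖) t := by
    intro t ht
    have hpos : 1 - t * ‖z‖ ≠ 0 := by linarith [(hmem t ht).2]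
    have h1 : HasDerivAt (fun t : ℝ => 1 - t * ‖z‖) (-‖z‖) t := by
      simpa using ((hasDerivAt_id t).mul_const ‖z‖).const_sub 1
    have h2 := (((h1.rpow_const (p := γ) (Or.inl hpos)).const_sub 1).const_mul (K / γ)).const_add 1
    have e : γ - 1 = -((α + 2) / p) := by rw [hγ]; ring
    rw [e] at h2
    have e2 : K * (1 - t * ‖z‖) ^ (-((α + 2) / p)) * ‖z‖ =
        K / γ * -(-‖z‖ * γ * (1 - t * ‖z‖) ^ (-((α + 2) / p))) := by
      field_simp
    rw [e2]
    exact h2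
  have := image_norm_le_of_norm_deriv_right_le_deriv_boundary'
    (f := fun t : ℝ => f (t * z)) (a := 0) (b := 1)
    (f' := fun t : ℝ => deriv f (t * z) * z)
    (B := fun t : ℝ => 1 + K / γ * (1 - (1 - t * ‖z‖) ^ γ))
    (B' := fun t : ℝ => K * (1 - t * ‖z‖) ^ (-((α + 2) / p)) * ‖z‖)
    (fun t ht => (hD t ht).continuousAt.continuousWithinAt)
    (fun t ht => (hD t (Ico_subset_Icc_self ht)).hasDerivWithinAt)
    (by simpa using (lintegral_le_one hp0 hf hn).1)
    (fun t ht => (hB t ht).continuousAt.continuousWithinAt)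
    (fun t ht => (hB t (Ico_subset_Icc_self ht)).hasDerivWithinAt)
    (fun t ht => by
      obtain ⟨e1, e2⟩ := hmem t (Ico_subset_Icc_self ht)
      have := hb f hf hn (t * z) (by rw [e1]; exact e2)
      rw [e1] at this
      rw [norm_mul]
      gcongr)
    (right_mem_Icc.2 zero_le_one)
  simp only [Complex.ofReal_one, one_mul] at this
  refine this.trans ?_
  have h0 : 0 ≤ (1 - ‖z‖) ^ γ := Real.rpow_nonneg (by linarith) _
  have h1 : 0 < K / γ := by positivity
  nlinarith

/-- Lemma 2.1(3): for `p > α + 2`, the point evaluation functional on `D^p_α` satisfies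
`‖δ_z‖ ≍ 1` uniformly in `z`. -/
theorem pointEval_dirichlet_supercritical (p α : ℝ) (hα : -1 < α) (hp : 0 < p)
    (hpα : α + 2 < p) :
    ∃ c C : ℝ, 0 < c ∧ 0 < C ∧ ∀ z ∈ unitDisk,
      c ≤ sSup {r : ℝ | ∃ f : ℂ → ℂ, MemDirichlet p α f ∧ dirichletNorm p α f ≤ 1 ∧ r = ‖f z‖} ∧
      sSup {r : ℝ | ∃ f : ℂ → ℂ, MemDirichlet p α f ∧ dirichletNorm p α f ≤ 1 ∧ r = ‖f z‖} ≤ C := by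
  obtain ⟨C, hC, hb⟩ := eval_bound p α (by linarith) hpα
  refine ⟨1, C, one_pos, hC, fun z hz => ?_⟩
  have hL : dirichletLintegral p α (fun _ => (1 : ℂ)) = 0 := by
    simp [dirichletLintegral, Real.zero_rpow hp.ne']
  have hmem : (1 : ℝ) ∈ {r : ℝ | ∃ f : ℂ → ℂ, MemDirichlet p α f ∧ dirichletNorm p α f ≤ 1 ∧
      r = ‖f z‖} := by
    refine ⟨fun _ => 1, ⟨differentiableOn_const _, ?_⟩, ?_, by simp⟩
    · rw [hL]; exact ENNReal.zero_lt_top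
    · simp [dirichletNorm, hL]
  have hub : ∀ r ∈ {r : ℝ | ∃ f : ℂ → ℂ, MemDirichlet p α f ∧ dirichletNorm p α f ≤ 1 ∧
      r = ‖f z‖}, r ≤ C := by
    rintro r ⟨f, hf, hn, rfl⟩
    exact hb z hz f hf hn
  exact ⟨le_csSup ⟨C, hub⟩ hmem, csSup_le ⟨1, hmem⟩ hub⟩
end
end

section
/- Let 0 < p < 1. Then the norm of the point evaluation functional δ_z on the derivative Hardy space S^p satisfies ‖δ_z‖ ≍ 1/(1-|z|²)^{1/p-1}, i.e., there exist constants c, C > 0 independent of z ∈ 𝔻 such that c/(1-|z|²)^{1/p-1} ≤ sup{|f(z)| : f ∈ S^p, ‖f‖_{S^p} ≤ 1} ≤ C/(1-|z|²)^{1/p-1} for all z ∈ 𝔻. -/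
open MeasureTheory Metric Set Filter Topology ENNReal

noncomputable section

/-- The normalized Lebesgue measure on the unit circle, parameterized by the angle
`θ ∈ (0, 2π]`. -/
def circleMeasure : Measure ℝ :=
  (ENNReal.ofReal (2 * Real.pi)⁻¹) • (volume.restrict (Set.Ioc 0 (2 * Real.pi)))

/-- `∫_{∂𝔻} |f(r ξ)|^p dm(ξ)`, as an extended nonnegative real. -/
def hardyLintegral (p : ℝ) (f : ℂ → ℂ) (r : ℝ) : ℝ≥0∞ :=
  ∫⁻ θ, ENNReal.ofReal (‖f ((r : ℂ) * Complex.exp ((θ : ℂ) * Complex.I))‖ ^ p) ∂circleMeasure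

/-- `sup_{0 ≤ r < 1} ∫_{∂𝔻} |f(r ξ)|^p dm(ξ)`. -/
def hardySup (p : ℝ) (f : ℂ → ℂ) : ℝ≥0∞ :=
  ⨆ r : Set.Ico (0 : ℝ) 1, hardyLintegral p f r

/-- Membership in the derivative Hardy space `S^p`: analytic on 𝔻 with `f' ∈ H^p`. -/
def MemS (p : ℝ) (f : ℂ → ℂ) : Prop :=
  DifferentiableOn ℂ f unitDisk ∧ hardySup p (deriv f) < ⊤

/-- The norm of the derivative Hardy space `S^p`: `|f(0)| + ‖f'‖_{H^p}`. -/
def sNorm (p : ℝ) (f : ℂ → ℂ) : ℝ :=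
  ‖f 0‖ + ((hardySup p (deriv f)).toReal) ^ (1 / p)


lemma hardyLintegral_eq_aux (p : ℝ) (hp : 0 < p) (g : ℂ → ℂ) (r : ℝ)
    (hg : ContinuousOn g (sphere 0 |r|)) :
    hardyLintegral p g r = ENNReal.ofReal (Real.circleAverage (fun w => ‖g w‖ ^ p) 0 r) := by
  have hcont : Continuous fun θ : ℝ => ‖g (circleMap 0 r θ)‖ ^ p := by
    have h1 : Continuous fun θ : ℝ => g (circleMap 0 r θ) :=
      hg.comp_continuous (continuous_circleMap 0 r) (fun θ => circleMap_mem_sphere' 0 r θ)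
    exact h1.norm.rpow_const (fun _ => Or.inr hp.le)
  unfold hardyLintegral circleMeasure
  rw [lintegral_smul_measure, Real.circleAverage_def, smul_eq_mul, smul_eq_mul,
    ENNReal.ofReal_mul (by positivity), intervalIntegral.integral_of_le (by positivity),
    ofReal_integral_eq_lintegral_ofReal]
  · simp [circleMap]
  · exact hcont.integrableOn_Ioc
  · exact Eventually.of_forall fun θ => by positivity

lemma circleIntegrable_aux (p : ℝ) (hp : 0 < p) (g : ℂ → ℂ) (r : ℝ)
    (hg : ContinuousOn g (sphere 0 |r|)) :
    CircleIntegrable (fun w => ‖g w‖ ^ p) 0 r := by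
  refine ContinuousOn.circleIntegrable' ?_
  exact hg.norm.rpow_const (fun _ _ => Or.inr hp.le)

lemma growth_aux (p : ℝ) (hp : 0 < p) (hp1 : p < 1) (g : ℂ → ℂ) (K : ℝ)
    (hg : DifferentiableOn ℂ g (ball 0 1))
    (hgK : ∀ r : ℝ, 0 ≤ r → r < 1 → Real.circleAverage (fun w => ‖g w‖ ^ p) 0 r ≤ K)
    (ρ : ℝ) (hρ0 : 0 < ρ) (hρ : ρ < 1) (z : ℂ) (hz : ‖z‖ ≤ ρ) :
    (ρ - ‖z‖) ^ (1 / p) * ‖g z‖ ≤ ((2 : ℝ) ^ (1 / p) * K) ^ (1 / p) := by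
  have hK : 0 ≤ K := le_trans (Real.circleAverage_nonneg_of_nonneg (fun w _ => by positivity))
    (hgK 0 le_rfl one_pos)
  have hsub : closedBall (0 : ℂ) ρ ⊆ ball 0 1 := closedBall_subset_ball hρ
  have hcont : ContinuousOn (fun w : ℂ => (ρ - ‖w‖) ^ (1 / p) * ‖g w‖) (closedBall 0 ρ) := by
    refine ContinuousOn.mul ?_ (hg.continuousOn.mono hsub).norm
    exact (continuous_const.sub continuous_norm).continuousOn.rpow_const
      (fun _ _ => Or.inr (by positivity))
  obtain ⟨z0, hz0, hmax⟩ := (isCompact_closedBall (0 : ℂ) ρ).exists_isMaxOn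
    ⟨0, by simp [hρ0.le]⟩ hcont
  have hzmem : z ∈ closedBall (0 : ℂ) ρ := by simpa using hz
  have hz0' : ‖z0‖ ≤ ρ := by simpa using hz0
  refine (hmax hzmem).trans ?_
  change (ρ - ‖z0‖) ^ (1 / p) * ‖g z0‖ ≤ _
  set N := (ρ - ‖z0‖) ^ (1 / p) * ‖g z0‖ with hN
  have hN0 : 0 ≤ N := mul_nonneg (Real.rpow_nonneg (by linarith) _) (norm_nonneg _)
  rcases hN0.eq_or_lt with h0 | hNpos
  · rw [← h0]; positivity
  have hd : 0 < ρ - ‖z0‖ := by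
    rcases (sub_nonneg.2 hz0').eq_or_lt with h | h
    · exfalso
      rw [hN, ← h, Real.zero_rpow (by positivity), zero_mul] at hNpos
      exact lt_irrefl _ hNpos
    · exact h
  set d := ρ - ‖z0‖ with hdd
  set R := ‖z0‖ + d / 2 with hR
  have hRpos : 0 < R := by have := norm_nonneg z0; linarith
  have hRρ : R < ρ := by linarith
  have hRabs : |R| = R := abs_of_pos hRpos
  have hsph : sphere (0 : ℂ) |R| ⊆ ball 0 1 := by
    intro w hw
    simp [hRabs] at hw ⊢; linarith
  have hcl : DiffContOnCl ℂ g (ball 0 |R|) := by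
    apply DifferentiableOn.diffContOnCl
    rw [closure_ball _ (by positivity)]
    refine hg.mono (closedBall_subset_ball ?_)
    rw [hRabs]; linarith
  have hz0R : z0 ∈ ball (0 : ℂ) |R| := by
    simp [hRabs]; linarith
  have hcau := hcl.circleAverage_smul_div hz0R
  -- pointwise bound on the circle
  set T := N * (d / 2) ^ (-(1 / p)) with hT
  have hTpos : 0 < T := mul_pos hNpos (Real.rpow_pos_of_pos (by linarith) _)
  have hpt : ∀ w ∈ sphere (0 : ℂ) |R|, ‖g w‖ ≤ T := by
    intro w hw
    have hw' : ‖w‖ = R := by simpa [hRabs] using hw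
    have h1 : (ρ - ‖w‖) ^ (1 / p) * ‖g w‖ ≤ N := hmax (by simp; linarith)
    have h2 : ρ - ‖w‖ = d / 2 := by rw [hw', hR, hdd]; ring
    rw [h2] at h1
    rw [hT, Real.rpow_neg (by linarith), ← div_eq_mul_inv, le_div_iff₀ (by positivity)]
    linarith
  have hpt2 : ∀ w ∈ sphere (0 : ℂ) |R|,
      ‖((w - 0) / (w - z0)) • g w‖ ≤ (2 / d * T ^ (1 - p)) * ‖g w‖ ^ p := by
    intro w hw
    have hw' : ‖w‖ = R := by simpa [hRabs] using hw
    have h3 : d / 2 ≤ ‖w - z0‖ := by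
      have := norm_sub_norm_le w z0
      linarith
    have h4 : ‖(w - 0) / (w - z0)‖ ≤ 2 / d := by
      rw [sub_zero, norm_div, hw', div_le_div_iff₀ (by linarith) hd]
      nlinarith
    have h5 : ‖g w‖ ≤ T ^ (1 - p) * ‖g w‖ ^ p := by
      rcases (norm_nonneg (g w)).eq_or_lt with h | h
      · rw [← h, Real.zero_rpow hp.ne']; simp
      · calc ‖g w‖ = ‖g w‖ ^ (1 - p) * ‖g w‖ ^ p := by
              rw [← Real.rpow_add h]; simp
          _ ≤ _ := by
              have := Real.rpow_le_rpow h.le (hpt w hw) (by linarith : 0 ≤ 1 - p)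
              gcongr
    rw [norm_smul, mul_assoc]
    exact mul_le_mul h4 h5 (norm_nonneg _) (by positivity)
  have hmain : ‖g z0‖ ≤ (2 / d * T ^ (1 - p)) * K := by
    have hgs : ContinuousOn g (sphere (0 : ℂ) |R|) := hg.continuousOn.mono hsph
    have hci := circleIntegrable_aux p hp g R hgs
    calc ‖g z0‖ = ‖Real.circleAverage (fun w => ((w - 0) / (w - z0)) • g w) 0 R‖ := by rw [hcau]
      _ ≤ Real.circleAverage (fun w => (2 / d * T ^ (1 - p)) • ‖g w‖ ^ p) 0 R := by
          rw [Real.circleAverage_def, Real.circleAverage_def, norm_smul, smul_eq_mul,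
            Real.norm_of_nonneg (by positivity)]
          refine mul_le_mul_of_nonneg_left ?_ (by positivity)
          refine intervalIntegral.norm_integral_le_of_norm_le (by positivity) ?_ ?_
          · exact Eventually.of_forall fun θ _ => hpt2 _ (circleMap_mem_sphere' 0 R θ)
          · exact IntervalIntegrable.const_mul hci _
      _ = (2 / d * T ^ (1 - p)) * Real.circleAverage (fun w => ‖g w‖ ^ p) 0 R := by
          rw [Real.circleAverage_fun_smul]; rfl
      _ ≤ _ := by
          have := hgK R hRpos.le (by linarith)
          gcongr
  have hfin : N ≤ (2 : ℝ) ^ (1 / p) * K * N ^ (1 - p) := by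
    have e1 : d ^ (1 / p) * (2 / d * T ^ (1 - p)) = (2 : ℝ) ^ (1 / p) * N ^ (1 - p) := by
      rw [hT, Real.mul_rpow hN0 (by positivity), ← Real.rpow_mul (by positivity)]
      have e2 : (2 : ℝ) / d = (d / 2) ^ (-1 : ℝ) := by
        rw [Real.rpow_neg_one, inv_div]
      have e3 : d ^ (1 / p) = (2 : ℝ) ^ (1 / p) * (d / 2) ^ (1 / p) := by
        rw [← Real.mul_rpow (by positivity) (by positivity)]; congr 1; ring
      rw [e2, e3]
      have e4 : (d / 2) ^ (1 / p) * ((d / 2) ^ (-1 : ℝ) * (d / 2) ^ (-(1 / p) * (1 - p))) = 1 := by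
        rw [← Real.rpow_add (by positivity), ← Real.rpow_add (by positivity)]
        have : 1 / p + (-1 + -(1 / p) * (1 - p)) = 0 := by field_simp; ring
        rw [this, Real.rpow_zero]
      linear_combination (2 : ℝ) ^ (1 / p) * N ^ (1 - p) * e4
    calc N ≤ d ^ (1 / p) * ((2 / d * T ^ (1 - p)) * K) := by
          rw [hN]; gcongr
      _ = _ := by linear_combination K * e1
  have hNp : N ^ p ≤ (2 : ℝ) ^ (1 / p) * K := by
    have hq : 0 < N ^ (1 - p) := Real.rpow_pos_of_pos hNpos _
    have : N ^ p * N ^ (1 - p) = N := by rw [← Real.rpow_add hNpos]; simp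
    refine le_of_mul_le_mul_right ?_ hq
    rw [this]; exact hfin
  calc N = (N ^ p) ^ (1 / p) := by
        rw [← Real.rpow_mul hN0, mul_one_div_cancel hp.ne', Real.rpow_one]
    _ ≤ _ := Real.rpow_le_rpow (by positivity) hNp (by positivity)

lemma one_sub_ne_aux (a w : ℂ) (ha : ‖a‖ < 1) (hw : ‖w‖ ≤ 1) :
    (1 - ‖a‖ ^ 2) / 2 ≤ ‖1 - (starRingEnd ℂ) a * w‖ := by
  have h1 : 1 - ‖a‖ * ‖w‖ ≤ ‖1 - (starRingEnd ℂ) a * w‖ := by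
    have := norm_sub_norm_le (1 : ℂ) ((starRingEnd ℂ) a * w)
    simpa using this
  have := norm_nonneg a
  nlinarith

lemma poisson_aux (a : ℂ) (ha : ‖a‖ < 1) (r : ℝ) (hr : 0 ≤ r) (hr1 : r < 1) :
    Real.circleAverage (fun w => (‖1 - (starRingEnd ℂ) a * w‖ ^ 2)⁻¹) 0 r ≤ (1 - ‖a‖ ^ 2)⁻¹ := by
  have hδ : 0 < 1 - ‖a‖ ^ 2 := by have := norm_nonneg a; nlinarith
  rcases hr.eq_or_lt with h0 | hpos
  · rw [← h0, Real.circleAverage_zero]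
    have : (1 : ℝ) ≤ (1 - ‖a‖ ^ 2)⁻¹ := by
      rw [one_le_inv₀ hδ]; nlinarith [sq_nonneg ‖a‖]
    simpa using this
  have hne : ∀ w : ℂ, ‖w‖ ≤ 1 → 1 - (starRingEnd ℂ) a * w ≠ 0 := by
    intro w hw h
    have := one_sub_ne_aux a w ha hw
    rw [h, norm_zero] at this
    linarith
  have habs : |r| = r := abs_of_pos hpos
  have hd : DiffContOnCl ℂ (fun w => (1 - (starRingEnd ℂ) a * w)⁻¹) (ball 0 |r|) := by
    apply DifferentiableOn.diffContOnCl
    rw [closure_ball _ (by positivity)]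
    intro w hw
    have hw' : ‖w‖ ≤ r := by simpa [habs] using hw
    refine DifferentiableAt.differentiableWithinAt ?_
    exact DifferentiableAt.inv (by fun_prop) (hne w (by linarith))
  have hmem : a * (r : ℂ) ^ 2 ∈ ball (0 : ℂ) |r| := by
    simp [habs]
    have := norm_nonneg a
    nlinarith [mul_pos hpos hpos]
  have hc := hd.circleAverage_smul_div hmem
  have hrw : Real.circleAverage (fun w => ((w - 0) / (w - a * (r : ℂ) ^ 2)) •
      (1 - (starRingEnd ℂ) a * w)⁻¹) 0 r =
      Real.circleAverage (fun w => (((‖1 - (starRingEnd ℂ) a * w‖ ^ 2)⁻¹ : ℝ) : ℂ)) 0 r := by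
    refine Real.circleAverage_congr_sphere ?_
    intro w hw
    have hw' : ‖w‖ = r := by simpa [habs] using hw
    have hw0 : w ≠ 0 := by intro h; rw [h, norm_zero] at hw'; linarith
    have hww : w * (starRingEnd ℂ) w = (r : ℂ) ^ 2 := by
      rw [Complex.mul_conj, Complex.normSq_eq_norm_sq, hw']; push_cast; ring
    have h1 := hne w (by linarith)
    have h2 : (starRingEnd ℂ) (1 - (starRingEnd ℂ) a * w) ≠ 0 := by
      simpa only [ne_eq, map_eq_zero] using h1
    have h3 : ((‖1 - (starRingEnd ℂ) a * w‖ ^ 2 : ℝ) : ℂ) =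
        (1 - (starRingEnd ℂ) a * w) * (starRingEnd ℂ) (1 - (starRingEnd ℂ) a * w) := by
      rw [Complex.mul_conj, Complex.normSq_eq_norm_sq]
    have h4 : w - a * (r : ℂ) ^ 2 = w * (starRingEnd ℂ) (1 - (starRingEnd ℂ) a * w) := by
      rw [← hww]; simp; ring
    simp only [sub_zero, smul_eq_mul]
    rw [Complex.ofReal_inv, h3, h4]
    field_simp
  rw [hrw] at hc
  have hre : Real.circleAverage (fun w => (((‖1 - (starRingEnd ℂ) a * w‖ ^ 2)⁻¹ : ℝ) : ℂ)) 0 r =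
      ((Real.circleAverage (fun w => (‖1 - (starRingEnd ℂ) a * w‖ ^ 2)⁻¹) 0 r : ℝ) : ℂ) := by
    rw [Real.circleAverage_def, Real.circleAverage_def, intervalIntegral.integral_ofReal]
    simp
  rw [hre] at hc
  have h5 : (1 - (starRingEnd ℂ) a * (a * (r : ℂ) ^ 2))⁻¹ = (((1 - ‖a‖ ^ 2 * r ^ 2)⁻¹ : ℝ) : ℂ) := by
    rw [← mul_assoc, mul_comm ((starRingEnd ℂ) a), Complex.mul_conj, Complex.normSq_eq_norm_sq]
    push_cast; ring
  rw [h5] at hc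
  have hc' := Complex.ofReal_injective hc
  rw [hc']
  have : ‖a‖ ^ 2 * r ^ 2 ≤ ‖a‖ ^ 2 := by
    have : r ^ 2 ≤ 1 := by nlinarith
    nlinarith [sq_nonneg ‖a‖]
  exact inv_anti₀ hδ (by linarith)

lemma lower_aux (p : ℝ) (hp : 0 < p) (m : ℕ) (hm : 2 / p ≤ m + 1) (a : ℂ) (ha : ‖a‖ < 1)
    (L : ℝ) (hL : L = 1 + m * 2 ^ ((m : ℝ) + 1 - 2 / p)) :
    ∃ f : ℂ → ℂ, MemS p f ∧ sNorm p f ≤ 1 ∧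
      ‖f a‖ = (1 / L) / (1 - ‖a‖ ^ 2) ^ (1 / p - 1) := by
  have hδ : 0 < 1 - ‖a‖ ^ 2 := by have := norm_nonneg a; nlinarith
  have hδ1 : 1 - ‖a‖ ^ 2 ≤ 1 := by nlinarith [sq_nonneg ‖a‖]
  have hlow := fun w hw => one_sub_ne_aux a w ha hw
  have hpois := poisson_aux a ha
  have hL0 : 0 < L := by rw [hL]; positivity
  have hne : ∀ w : ℂ, ‖w‖ ≤ 1 → 1 - (starRingEnd ℂ) a * w ≠ 0 := by
    intro w hw h
    have := hlow w hw
    rw [h, norm_zero] at this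
    linarith
  have haa : 1 - (starRingEnd ℂ) a * a = ((1 - ‖a‖ ^ 2 : ℝ) : ℂ) := by
    rw [mul_comm, Complex.mul_conj, Complex.normSq_eq_norm_sq]; push_cast; ring
  have hna : ‖a‖ ^ 2 ≤ 1 := by linarith
  set δ := 1 - ‖a‖ ^ 2 with hδdef
  set e := (m : ℝ) + 1 - 2 / p with he
  have he0 : 0 ≤ e := by linarith
  set A : ℝ := δ ^ ((m : ℝ) + 1 - 1 / p) / L with hA
  have hA0 : 0 < A := by positivity
  set q : ℝ := m * 2 ^ e / L with hq
  have hq0 : 0 ≤ q := by positivity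
  have h1p : 1 / p ≤ 2 / p := by gcongr; norm_num
  set f : ℂ → ℂ := fun w => (A : ℂ) * ((1 - (starRingEnd ℂ) a * w) ^ m)⁻¹ with hf
  have hder : ∀ w : ℂ, ‖w‖ ≤ 1 → HasDerivAt f
      ((A : ℂ) * (m * (starRingEnd ℂ) a * ((1 - (starRingEnd ℂ) a * w) ^ (m + 1))⁻¹)) w := by
    intro w hw
    have h0 := hne w hw
    have h1 : HasDerivAt (fun w : ℂ => 1 - (starRingEnd ℂ) a * w) (-(starRingEnd ℂ) a) w := by
      simpa using ((hasDerivAt_id w).const_mul ((starRingEnd ℂ) a)).const_sub 1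
    have h2 := ((h1.fun_pow m).fun_inv (pow_ne_zero m h0)).const_mul (A : ℂ)
    refine h2.congr_deriv ?_
    rcases m with _ | m
    · simp
    · simp only [Nat.add_sub_cancel]
      field_simp
      ring
  have hdern : ∀ w : ℂ, ‖w‖ ≤ 1 →
      ‖deriv f w‖ ^ p ≤ (q ^ p * δ) * (‖1 - (starRingEnd ℂ) a * w‖ ^ 2)⁻¹ := by
    intro w hw
    set x := ‖1 - (starRingEnd ℂ) a * w‖ with hx
    have hxδ : δ / 2 ≤ x := hlow w hw
    have hx0 : 0 < x := by linarith
    have h1 : ‖deriv f w‖ ≤ q * (δ ^ (1 / p) * x ^ (-(2 / p))) := by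
      rw [(hder w hw).deriv]
      have h2 : ‖(A : ℂ) * (m * (starRingEnd ℂ) a * ((1 - (starRingEnd ℂ) a * w) ^ (m + 1))⁻¹)‖
          = A * (m * ‖a‖ * (x ^ (m + 1))⁻¹) := by
        simp [hx, abs_of_pos hA0]
      rw [h2]
      have h3 : (x ^ (m + 1))⁻¹ = x ^ (-(2 / p)) * x ^ (-e) := by
        rw [← Real.rpow_add hx0, ← Real.rpow_natCast, ← Real.rpow_neg hx0.le]
        congr 1; rw [he]; push_cast; ring
      have h4 : x ^ (-e) ≤ (δ / 2) ^ (-e) :=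
        Real.rpow_le_rpow_of_nonpos (by positivity) hxδ (by linarith)
      have h5 : (δ / 2) ^ (-e) = δ ^ (-e) * 2 ^ e := by
        rw [Real.div_rpow hδ.le (by norm_num), Real.rpow_neg (by norm_num : (0:ℝ) ≤ 2)]
        field_simp
      have h6 : δ ^ ((m : ℝ) + 1 - 1 / p) * δ ^ (-e) = δ ^ (1 / p) := by
        rw [← Real.rpow_add hδ]; congr 1; rw [he]; ring
      calc A * (m * ‖a‖ * (x ^ (m + 1))⁻¹)
          ≤ A * (m * 1 * (x ^ (-(2 / p)) * (δ ^ (-e) * 2 ^ e))) := by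
            rw [h3, ← h5]; gcongr
        _ = q * (δ ^ (1 / p) * x ^ (-(2 / p))) := by
            rw [hA, hq, ← h6]; ring
    calc ‖deriv f w‖ ^ p ≤ (q * (δ ^ (1 / p) * x ^ (-(2 / p)))) ^ p :=
          Real.rpow_le_rpow (norm_nonneg _) h1 hp.le
      _ = _ := by
          rw [Real.mul_rpow hq0 (by positivity), Real.mul_rpow (by positivity) (by positivity),
            ← Real.rpow_mul hδ.le, ← Real.rpow_mul hx0.le, one_div_mul_cancel hp.ne',
            Real.rpow_one, neg_mul, div_mul_cancel₀ _ hp.ne', Real.rpow_neg hx0.le,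
            Real.rpow_two]
          ring
  have hdiff : DifferentiableOn ℂ f (ball 0 1) := by
    intro w hw
    have hw' : ‖w‖ < 1 := by simpa using hw
    exact (hder w hw'.le).differentiableAt.differentiableWithinAt
  have hdd : ContinuousOn (deriv f) (ball 0 1) := (hdiff.deriv isOpen_ball).continuousOn
  have hsup : hardySup p (deriv f) ≤ ENNReal.ofReal (q ^ p) := by
    refine iSup_le ?_
    rintro ⟨r, hr0, hr1⟩
    have hsph : sphere (0 : ℂ) |r| ⊆ ball 0 1 := by
      intro w hw
      simp [abs_of_nonneg hr0] at hw ⊢; linarith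
    have hc := hdd.mono hsph
    change hardyLintegral p (deriv f) r ≤ _
    rw [hardyLintegral_eq_aux p hp _ r hc]
    refine ENNReal.ofReal_le_ofReal ?_
    have hci : ContinuousOn (fun w => (‖1 - (starRingEnd ℂ) a * w‖ ^ 2)⁻¹) (sphere (0 : ℂ) |r|) := by
      refine ContinuousOn.inv₀ (by fun_prop) ?_
      intro w hw
      have := hsph hw
      have h := hne w (by simp at this; exact this.le)
      positivity
    calc Real.circleAverage (fun w => ‖deriv f w‖ ^ p) 0 r
        ≤ Real.circleAverage (fun w => (q ^ p * δ) • (‖1 - (starRingEnd ℂ) a * w‖ ^ 2)⁻¹) 0 r := by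
          refine Real.circleAverage_mono (circleIntegrable_aux p hp _ r hc) ?_ ?_
          · exact (hci.const_smul (q ^ p * δ)).circleIntegrable'
          · intro w hw
            have := hsph hw
            exact hdern w (by simp at this; exact this.le)
      _ = (q ^ p * δ) * Real.circleAverage (fun w => (‖1 - (starRingEnd ℂ) a * w‖ ^ 2)⁻¹) 0 r := by
          rw [Real.circleAverage_fun_smul]; rfl
      _ ≤ (q ^ p * δ) * δ⁻¹ := by
          have := hpois r hr0 hr1
          gcongr
      _ = q ^ p := by field_simp
  refine ⟨f, ⟨hdiff, hsup.trans_lt ENNReal.ofReal_lt_top⟩, ?_, ?_⟩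
  · have h1 : (hardySup p (deriv f)).toReal ≤ q ^ p := by
      have := ENNReal.toReal_mono ENNReal.ofReal_ne_top hsup
      rwa [ENNReal.toReal_ofReal (by positivity)] at this
    have h2 : (hardySup p (deriv f)).toReal ^ (1 / p) ≤ q := by
      calc _ ≤ (q ^ p) ^ (1 / p) := Real.rpow_le_rpow ENNReal.toReal_nonneg h1 (by positivity)
        _ = q := by rw [← Real.rpow_mul hq0, mul_one_div_cancel hp.ne', Real.rpow_one]
    have h3 : ‖f 0‖ ≤ 1 / L := by
      have : ‖f 0‖ = A := by simp [hf, abs_of_pos hA0]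
      rw [this, hA]
      gcongr
      exact Real.rpow_le_one hδ.le hδ1 (by linarith)
    have h4 : 1 / L + q = 1 := by
      rw [hq]; field_simp; rw [hL]
    unfold sNorm
    linarith
  · have h1 : ‖f a‖ = A * (δ ^ m)⁻¹ := by
      simp only [hf]
      rw [haa, norm_mul, norm_inv, norm_pow, Complex.norm_real, Complex.norm_real,
        Real.norm_of_nonneg hA0.le, Real.norm_of_nonneg hδ.le]
    rw [h1, hA, ← Real.rpow_natCast, ← Real.rpow_neg hδ.le, div_eq_mul_inv (1 / L), ← Real.rpow_neg hδ.le]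
    rw [div_mul_eq_mul_div, ← Real.rpow_add hδ, one_div_mul_eq_div]
    congr 2; ring

lemma upper_aux (p : ℝ) (hp : 0 < p) (hp1 : p < 1) (f : ℂ → ℂ) (hf : MemS p f)
    (hn : sNorm p f ≤ 1) (z : ℂ) (hz : ‖z‖ < 1) (B : ℝ)
    (hB : B = ((2 : ℝ) ^ (1 / p)) ^ (1 / p) * 2 ^ (1 / p)) :
    ‖f z‖ ≤ (1 + B / (1 / p - 1) * 2 ^ (1 / p - 1)) / (1 - ‖z‖ ^ 2) ^ (1 / p - 1) := by
  obtain ⟨hd, hs⟩ := hf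
  have hd : DifferentiableOn ℂ f (ball 0 1) := hd
  have hdd : DifferentiableOn ℂ (deriv f) (ball 0 1) := hd.deriv isOpen_ball
  have hs1 : 0 < 1 / p - 1 := by
    have := (one_lt_div hp).2 hp1; linarith
  set K := (hardySup p (deriv f)).toReal with hK
  have hK0 : 0 ≤ K := ENNReal.toReal_nonneg
  unfold sNorm at hn
  have hK1 : K ^ (1 / p) ≤ 1 := by have := norm_nonneg (f 0); linarith
  have hf0 : ‖f 0‖ ≤ 1 := by
    have : 0 ≤ K ^ (1 / p) := by positivity
    linarith
  have hB0 : 0 < B := by rw [hB]; positivity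
  have hgK : ∀ r : ℝ, 0 ≤ r → r < 1 →
      Real.circleAverage (fun w => ‖deriv f w‖ ^ p) 0 r ≤ K := by
    intro r hr0 hr1
    have hsph : sphere (0 : ℂ) |r| ⊆ ball 0 1 := by
      intro w hw
      simp [abs_of_nonneg hr0] at hw ⊢; linarith
    have h1 : hardyLintegral p (deriv f) r ≤ hardySup p (deriv f) :=
      le_iSup (fun r : Set.Ico (0 : ℝ) 1 => hardyLintegral p (deriv f) r) ⟨r, hr0, hr1⟩
    rw [hardyLintegral_eq_aux p hp _ r (hdd.continuousOn.mono hsph)] at h1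
    exact (ENNReal.ofReal_le_iff_le_toReal hs.ne).1 h1
  have hgrow : ∀ w : ℂ, ‖w‖ < 1 → ‖deriv f w‖ ≤ B * (1 - ‖w‖) ^ (-(1 / p)) := by
    intro w hw
    have h0 := norm_nonneg w
    have h1 := growth_aux p hp hp1 (deriv f) K hdd hgK ((1 + ‖w‖) / 2) (by linarith) (by linarith)
      w (by linarith)
    have e1 : (1 + ‖w‖) / 2 - ‖w‖ = (1 - ‖w‖) / 2 := by ring
    have hw0 : 0 < 1 - ‖w‖ := by linarith
    rw [e1, Real.div_rpow hw0.le (by norm_num), Real.mul_rpow (by positivity) hK0] at h1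
    have h2 : ((2 : ℝ) ^ (1 / p)) ^ (1 / p) * K ^ (1 / p) ≤ ((2 : ℝ) ^ (1 / p)) ^ (1 / p) :=
      mul_le_of_le_one_right (by positivity) hK1
    have h3 := h1.trans h2
    rw [Real.rpow_neg hw0.le, ← div_eq_mul_inv, le_div_iff₀ (by positivity), hB]
    rw [div_mul_eq_mul_div, div_le_iff₀ (by positivity)] at h3
    linarith
  set s := 1 / p - 1 with hsdef
  set x := ‖z‖ with hx
  have hx0 : 0 ≤ x := norm_nonneg z
  have hpos : ∀ t ∈ Icc (0 : ℝ) 1, 0 < 1 - t * x := by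
    intro t ht
    have : t * x ≤ 1 * x := mul_le_mul_of_nonneg_right ht.2 hx0
    linarith
  have hnt : ∀ t ∈ Icc (0 : ℝ) 1, ‖(t : ℂ) * z‖ = t * x := by
    intro t ht
    rw [norm_mul, Complex.norm_real, Real.norm_of_nonneg ht.1]
  have hfd : ∀ t ∈ Icc (0 : ℝ) 1,
      HasDerivAt (fun t : ℝ => f ((t : ℂ) * z)) (deriv f ((t : ℂ) * z) * z) t := by
    intro t ht
    have hmem : (t : ℂ) * z ∈ ball (0 : ℂ) 1 := by
      have := hpos t ht
      rw [mem_ball_zero_iff, hnt t ht]; linarith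
    have h1 := (hd.differentiableAt (isOpen_ball.mem_nhds hmem)).hasDerivAt
    have h2 : HasDerivAt (fun t : ℝ => (t : ℂ) * z) z t := by
      simpa using (Complex.ofRealCLM.hasDerivAt (x := t)).mul_const z
    exact h1.comp t h2
  have hBd : ∀ t ∈ Icc (0 : ℝ) 1, HasDerivAt (fun t : ℝ => 1 + B / s * (1 - t * x) ^ (-s))
      (B * (1 - t * x) ^ (-(1 / p)) * x) t := by
    intro t ht
    have h1 : HasDerivAt (fun t : ℝ => 1 - t * x) (-x) t := by
      simpa using ((hasDerivAt_id t).mul_const x).const_sub 1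
    have h2 := ((h1.rpow_const (p := -s) (Or.inl (hpos t ht).ne')).const_mul (B / s)).const_add 1
    refine h2.congr_deriv ?_
    have : -s - 1 = -(1 / p) := by rw [hsdef]; ring
    rw [this]; field_simp
  have key := image_norm_le_of_norm_deriv_right_le_deriv_boundary'
    (f := fun t : ℝ => f ((t : ℂ) * z)) (a := 0) (b := 1)
    (fun t ht => (hfd t ht).continuousAt.continuousWithinAt)
    (fun t ht => (hfd t (Ico_subset_Icc_self ht)).hasDerivWithinAt)
    (B := fun t : ℝ => 1 + B / s * (1 - t * x) ^ (-s))
    (by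
      have : 0 ≤ B / s := by positivity
      simp
      linarith)
    (fun t ht => (hBd t ht).continuousAt.continuousWithinAt)
    (fun t ht => (hBd t (Ico_subset_Icc_self ht)).hasDerivWithinAt)
    (by
      intro t ht
      have ht' := Ico_subset_Icc_self ht
      rw [norm_mul]
      have h1 := hgrow ((t : ℂ) * z) (by rw [hnt t ht']; linarith [hpos t ht'])
      rw [hnt t ht'] at h1
      gcongr)
    (right_mem_Icc.2 zero_le_one)
  simp only [Complex.ofReal_one, one_mul] at key
  refine key.trans ?_
  have hδ : 0 < 1 - x ^ 2 := by nlinarith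
  have h1 : (1 - x) ^ (-s) ≤ ((1 - x ^ 2) / 2) ^ (-s) :=
    Real.rpow_le_rpow_of_nonpos (by positivity) (by nlinarith) (by linarith)
  have h2 : ((1 - x ^ 2) / 2) ^ (-s) = 2 ^ s / (1 - x ^ 2) ^ s := by
    rw [Real.rpow_neg (by positivity), Real.div_rpow hδ.le (by norm_num), inv_div]
  have h3 : 1 ≤ 1 / (1 - x ^ 2) ^ s := by
    rw [le_div_iff₀ (by positivity), one_mul]
    exact Real.rpow_le_one hδ.le (by nlinarith) hs1.le
  rw [h2] at h1
  calc 1 + B / s * (1 - x) ^ (-s) ≤ 1 / (1 - x ^ 2) ^ s + B / s * (2 ^ s / (1 - x ^ 2) ^ s) := by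
        gcongr
    _ = _ := by ring

/-- Lemma 3.1(1): for `0 < p < 1`, the point evaluation functional on `S^p` satisfies
`‖δ_z‖ ≍ (1-|z|²)^{-(1/p-1)}`. -/
theorem pointEval_Sp_small (p : ℝ) (hp : 0 < p) (hp1 : p < 1) :
    ∃ c C : ℝ, 0 < c ∧ 0 < C ∧ ∀ z ∈ unitDisk,
      c / (1 - ‖z‖ ^ 2) ^ (1 / p - 1) ≤
        sSup {r : ℝ | ∃ f : ℂ → ℂ, MemS p f ∧ sNorm p f ≤ 1 ∧ r = ‖f z‖} ∧
      sSup {r : ℝ | ∃ f : ℂ → ℂ, MemS p f ∧ sNorm p f ≤ 1 ∧ r = ‖f z‖} ≤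
        C / (1 - ‖z‖ ^ 2) ^ (1 / p - 1) := by

  obtain ⟨m, hm⟩ := exists_nat_ge (2 / p)
  have hs1 : 0 < 1 / p - 1 := by
    have := (one_lt_div hp).2 hp1; linarith
  refine ⟨1 / (1 + m * 2 ^ ((m : ℝ) + 1 - 2 / p)),
    1 + (((2 : ℝ) ^ (1 / p)) ^ (1 / p) * 2 ^ (1 / p)) / (1 / p - 1) * 2 ^ (1 / p - 1),
    by positivity, by positivity, ?_⟩
  intro z hz
  have hz1 : ‖z‖ < 1 := by simpa [unitDisk] using hz
  obtain ⟨f, hf, hn, hfz⟩ := lower_aux p hp m (by linarith) z hz1 _ rfl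
  have hub : ∀ r ∈ {r : ℝ | ∃ f : ℂ → ℂ, MemS p f ∧ sNorm p f ≤ 1 ∧ r = ‖f z‖},
      r ≤ (1 + (((2 : ℝ) ^ (1 / p)) ^ (1 / p) * 2 ^ (1 / p)) / (1 / p - 1) * 2 ^ (1 / p - 1)) /
        (1 - ‖z‖ ^ 2) ^ (1 / p - 1) := by
    rintro r ⟨g, hg, hgn, rfl⟩
    exact upper_aux p hp hp1 g hg hgn z hz1 _ rfl
  constructor
  · exact le_csSup ⟨_, hub⟩ ⟨f, hf, hn, hfz.symm⟩
  · exact csSup_le ⟨_, f, hf, hn, rfl⟩ hub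
end
end

section
/- Let 1 ≤ p < ∞. Then the norm of the point evaluation functional δ_z on the derivative Hardy space S^p is comparable to 1 uniformly in z: there exist constants c, C > 0 independent of z ∈ 𝔻 such that c ≤ sup{|f(z)| : f ∈ S^p, ‖f‖_{S^p} ≤ 1} ≤ C for all z ∈ 𝔻. -/
open MeasureTheory Metric Set Filter Topology ENNReal

noncomputable section

theorem mean_bound_aux (p : ℝ) (hp : 1 ≤ p) (f : ℂ → ℂ) (hf : MemS p f) (hn : sNorm p f ≤ 1)
    (r : ℝ) (hr0 : 0 < r) (hr1 : r < 1) :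
    ∫ θ in Set.Ioc 0 (2 * Real.pi), ‖deriv f (circleMap 0 r θ)‖ ≤ 4 * Real.pi := by
  obtain ⟨hd, hfin⟩ := hf
  have hpi := Real.pi_pos
  have h1 : (hardySup p (deriv f)).toReal ≤ 1 := by
    by_contra hcon
    push Not at hcon
    have h2 : 1 < ((hardySup p (deriv f)).toReal) ^ (1 / p) :=
      Real.one_lt_rpow hcon (by positivity)
    unfold sNorm at hn
    linarith [norm_nonneg (f 0)]
  have h3 : hardySup p (deriv f) ≤ 1 := by
    rw [← ENNReal.toReal_le_toReal hfin.ne ENNReal.one_ne_top]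
    simpa using h1
  have h4 : hardyLintegral p (deriv f) r ≤ 1 :=
    le_trans (le_iSup (fun r : Set.Ico (0 : ℝ) 1 => hardyLintegral p (deriv f) r) ⟨r, hr0.le, hr1⟩) h3
  have hdd : DifferentiableOn ℂ (deriv f) unitDisk := hd.deriv isOpen_ball
  have hmem : ∀ θ, circleMap 0 r θ ∈ unitDisk := by
    intro θ
    simp [unitDisk, abs_of_pos hr0, hr1]
  have hcont : Continuous fun θ => deriv f (circleMap 0 r θ) :=
    hdd.continuousOn.comp_continuous (continuous_circleMap 0 r) hmem
  have h5 : ∫⁻ θ in Set.Ioc 0 (2 * Real.pi), ENNReal.ofReal (‖deriv f (circleMap 0 r θ)‖ ^ p)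
      ≤ ENNReal.ofReal (2 * Real.pi) := by
    have h6 : ENNReal.ofReal (2 * Real.pi)⁻¹ *
      ∫⁻ θ in Set.Ioc 0 (2 * Real.pi), ENNReal.ofReal (‖deriv f (circleMap 0 r θ)‖ ^ p) ≤ 1 := by
      simpa [hardyLintegral, circleMeasure, circleMap, lintegral_smul_measure] using h4
    rw [ENNReal.ofReal_inv_of_pos (by positivity), mul_comm, ← div_eq_mul_inv] at h6
    have := (ENNReal.div_le_iff (by simpa using hpi) ENNReal.ofReal_ne_top).1 h6
    simpa using this
  rw [integral_eq_lintegral_of_nonneg_ae (Eventually.of_forall fun _ => norm_nonneg _)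
    hcont.norm.aestronglyMeasurable]
  refine ENNReal.toReal_le_of_le_ofReal (by positivity) ?_
  calc _ ≤ ∫⁻ θ in Set.Ioc 0 (2 * Real.pi),
        (1 + ENNReal.ofReal (‖deriv f (circleMap 0 r θ)‖ ^ p)) := by
        refine lintegral_mono fun θ => ?_
        rw [← ENNReal.ofReal_one, ← ENNReal.ofReal_add zero_le_one (by positivity)]
        refine ENNReal.ofReal_le_ofReal ?_
        rcases le_total ‖deriv f (circleMap 0 r θ)‖ 1 with h | h
        · have : 0 ≤ ‖deriv f (circleMap 0 r θ)‖ ^ p := by positivity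
          linarith
        · have := Real.self_le_rpow_of_one_le h hp
          linarith
    _ = ENNReal.ofReal (2 * Real.pi) +
        ∫⁻ θ in Set.Ioc 0 (2 * Real.pi), ENNReal.ofReal (‖deriv f (circleMap 0 r θ)‖ ^ p) := by
        rw [lintegral_add_left measurable_const]
        simp
    _ ≤ ENNReal.ofReal (2 * Real.pi) + ENNReal.ofReal (2 * Real.pi) := by gcongr
    _ = ENNReal.ofReal (4 * Real.pi) := by
        rw [← ENNReal.ofReal_add (by positivity) (by positivity)]
        congr 1
        ring

theorem point_bound_aux (p : ℝ) (hp : 1 ≤ p) (f : ℂ → ℂ) (hf : MemS p f) (hn : sNorm p f ≤ 1)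
    (z : ℂ) (hz : z ∈ unitDisk) : ‖f z‖ ≤ 1 + 4 * Real.pi := by
  have hpi := Real.pi_pos
  have hf0 : ‖f 0‖ ≤ 1 := by
    have : 0 ≤ ((hardySup p (deriv f)).toReal) ^ (1 / p) := by positivity
    unfold sNorm at hn
    linarith
  rcases eq_or_ne z 0 with rfl | hz0
  · linarith
  have hr0 : 0 < ‖z‖ := norm_pos_iff.2 hz0
  have hr1 : ‖z‖ < 1 := by simpa [unitDisk] using hz
  set r := ‖z‖ with hr
  have hmean := mean_bound_aux p hp f hf hn r hr0 hr1
  have hd := hf.1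
  have hdd : DifferentiableOn ℂ (deriv f) unitDisk := hd.deriv isOpen_ball
  have hmem : ∀ θ, circleMap 0 r θ ∈ unitDisk := by
    intro θ
    simp [unitDisk, abs_of_pos hr0, hr1]
  have hcont : Continuous fun θ => deriv f (circleMap 0 r θ) :=
    hdd.continuousOn.comp_continuous (continuous_circleMap 0 r) hmem
  have hderiv : ∀ θ, HasDerivAt (fun θ => f (circleMap 0 r θ))
      (deriv f (circleMap 0 r θ) * (circleMap 0 r θ * Complex.I)) θ := by
    intro θ
    have h1 : HasDerivAt f (deriv f (circleMap 0 r θ)) (circleMap 0 r θ) :=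
      (hd.differentiableAt (isOpen_ball.mem_nhds (hmem θ))).hasDerivAt
    exact h1.comp θ (hasDerivAt_circleMap 0 r θ)
  have hosc : ∀ a ∈ Set.Ioc 0 (2 * Real.pi), ∀ b ∈ Set.Ioc 0 (2 * Real.pi),
      ‖f (circleMap 0 r b) - f (circleMap 0 r a)‖ ≤ 4 * Real.pi := by
    intro a ha b hb
    have hc' : Continuous fun θ => deriv f (circleMap 0 r θ) * (circleMap 0 r θ * Complex.I) :=
      hcont.mul ((continuous_circleMap 0 r).mul continuous_const)
    rw [← intervalIntegral.integral_eq_sub_of_hasDerivAt (fun θ _ => hderiv θ)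
      (hc'.intervalIntegrable a b)]
    refine (intervalIntegral.norm_integral_le_integral_norm_uIoc).trans (le_trans ?_ hmean)
    have hint : IntegrableOn (fun θ => ‖deriv f (circleMap 0 r θ)‖) (Set.Ioc 0 (2 * Real.pi)) :=
      (hcont.norm.integrableOn_Icc).mono_set Ioc_subset_Icc_self
    have hsub : Set.uIoc a b ⊆ Set.Ioc 0 (2 * Real.pi) := by
      intro x hx
      rw [Set.mem_uIoc] at hx
      rcases hx with hx | hx
      · exact ⟨ha.1.trans hx.1, hx.2.trans hb.2⟩
      · exact ⟨hb.1.trans hx.1, hx.2.trans ha.2⟩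
    calc _ ≤ ∫ θ in Set.uIoc a b, ‖deriv f (circleMap 0 r θ)‖ := by
          refine integral_mono ((hc'.norm.integrableOn_uIcc).mono_set uIoc_subset_uIcc)
            (hint.mono_set hsub) fun θ => ?_
          simp only [norm_mul, Complex.norm_I, mul_one, norm_circleMap_zero]
          rw [abs_of_pos hr0]
          exact mul_le_of_le_one_right (norm_nonneg _) hr1.le
      _ ≤ _ := setIntegral_mono_set hint (Eventually.of_forall fun _ => norm_nonneg _)
          (Eventually.of_forall hsub)
  have hsph : ∀ w ∈ sphere (0 : ℂ) r, ∃ a ∈ Set.Ioc 0 (2 * Real.pi), circleMap 0 r a = w := by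
    intro w hw
    have := image_circleMap_Ioc 0 r
    rw [abs_of_pos hr0] at this
    rw [← this] at hw
    exact hw
  obtain ⟨a, ha, haz⟩ := hsph z (by simp [hr])
  have hsubd : closedBall (0 : ℂ) r ⊆ unitDisk := closedBall_subset_ball hr1
  have key : ‖f 0 - f z‖ ≤ 4 * Real.pi := by
    have hdc : DiffContOnCl ℂ (fun w => f w - f z) (ball 0 r) := by
      apply DifferentiableOn.diffContOnCl
      rw [closure_ball _ hr0.ne']
      exact (hd.mono hsubd).sub_const _
    refine Complex.norm_le_of_forall_mem_frontier_norm_le isBounded_ball hdc ?_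
      (subset_closure (mem_ball_self hr0))
    intro w hw
    rw [frontier_ball _ hr0.ne'] at hw
    obtain ⟨b, hb, rfl⟩ := hsph w hw
    rw [← haz]
    exact hosc a ha b hb
  have : ‖f z‖ ≤ ‖f 0‖ + ‖f 0 - f z‖ := by
    have := norm_sub_le (f 0) (f 0 - f z)
    simpa using this
  linarith

/-- Lemma 3.1(2): for `1 ≤ p < ∞`, the point evaluation functional on `S^p` satisfies
`‖δ_z‖ ≍ 1` uniformly in `z`. -/
theorem pointEval_Sp_large (p : ℝ) (hp : 1 ≤ p) :
    ∃ c C : ℝ, 0 < c ∧ 0 < C ∧ ∀ z ∈ unitDisk,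
      c ≤ sSup {r : ℝ | ∃ f : ℂ → ℂ, MemS p f ∧ sNorm p f ≤ 1 ∧ r = ‖f z‖} ∧
      sSup {r : ℝ | ∃ f : ℂ → ℂ, MemS p f ∧ sNorm p f ≤ 1 ∧ r = ‖f z‖} ≤ C := by
  have hpi := Real.pi_pos
  refine ⟨1, 1 + 4 * Real.pi, one_pos, by positivity, fun z hz => ?_⟩
  have hub : ∀ x ∈ {r : ℝ | ∃ f : ℂ → ℂ, MemS p f ∧ sNorm p f ≤ 1 ∧ r = ‖f z‖},
      x ≤ 1 + 4 * Real.pi := by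
    rintro x ⟨f, hf, hn, rfl⟩
    exact point_bound_aux p hp f hf hn z hz
  have hp0 : p ≠ 0 := by positivity
  have hs : hardySup p (deriv fun _ : ℂ => (1 : ℂ)) = 0 := by
    simp [hardySup, hardyLintegral, Real.zero_rpow hp0]
  have hone : (1 : ℝ) ∈ {r : ℝ | ∃ f : ℂ → ℂ, MemS p f ∧ sNorm p f ≤ 1 ∧ r = ‖f z‖} := by
    refine ⟨fun _ => 1, ⟨differentiableOn_const _, by rw [hs]; simp⟩, ?_, by simp⟩
    unfold sNorm
    rw [hs]
    simp [Real.zero_rpow (inv_ne_zero hp0)]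
  exact ⟨le_csSup ⟨_, hub⟩ hone, csSup_le ⟨_, hone⟩ hub⟩
end
end

section
/- Let α > -1 and 0 < p < α + 2. For z ∈ 𝔻 define f_z(ω) = (1-|z|²)^{(α+2)/p} / (1-z̄ω)^{2(α+2)/p-1} for ω ∈ 𝔻. Then there is a constant C > 0 independent of z such that ‖f_z‖_{D^p_α} ≤ C for all z ∈ 𝔻; moreover f_z(z) = 1/(1-|z|²)^{(α+2-p)/p} and f'_z(z) = (z̄(2(α+2)-p)/p) · 1/(1-|z|²)^{(α+2)/p}. -/
open MeasureTheory Metric Set Filter Topology ENNReal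

noncomputable section

/-- The test function `f_z(ω) = (1-|z|²)^{(α+2)/p} / (1 - z̄ω)^{2(α+2)/p - 1}`. -/
def testFn (p α : ℝ) (z : ℂ) : ℂ → ℂ := fun ω =>
  (((1 - ‖z‖ ^ 2) ^ ((α + 2) / p) : ℝ) : ℂ) /
    (1 - (starRingEnd ℂ) z * ω) ^ ((2 * (α + 2) / p - 1 : ℝ) : ℂ)


lemma aux_det (c : ℂ) : ((ContinuousLinearMap.toSpanSingleton ℂ c).restrictScalars ℝ).det = ‖c‖ ^ 2 := by
  rw [ContinuousLinearMap.det, ← LinearMap.det_toMatrix Complex.basisOneI, Matrix.det_fin_two]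
  simp [LinearMap.toMatrix_apply, ← Complex.normSq_eq_norm_sq, Complex.normSq_apply]

lemma aux_finite (α : ℝ) (hα : -1 < α) :
    ∫⁻ w in unitDisk, ENNReal.ofReal ((1 - ‖w‖ ^ 2) ^ α) < ⊤ := by
  have hm : MeasurableSet unitDisk := measurableSet_ball
  rw [← lintegral_indicator hm, ← Complex.lintegral_comp_polarCoord_symm]
  have hb : ∀ q ∈ polarCoord.target, ENNReal.ofReal q.1 •
      (unitDisk.indicator (fun w : ℂ => ENNReal.ofReal ((1 - ‖w‖ ^ 2) ^ α)))
        (Complex.polarCoord.symm q) ≤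
      (Ioo (0:ℝ) 1 ×ˢ Ioo (-Real.pi) Real.pi).indicator
        (fun q : ℝ × ℝ => ENNReal.ofReal ((1 - q.1) ^ α * 2 ^ |α|)) q := by
    rintro ⟨r, θ⟩ ⟨hr, hθ⟩
    simp only [mem_Ioi] at hr
    have hn : ‖Complex.polarCoord.symm (r, θ)‖ = r := by
      rw [Complex.norm_polarCoord_symm]; exact abs_of_pos hr
    by_cases h1 : r < 1
    · rw [indicator_of_mem (by rw [unitDisk, mem_ball_zero_iff, hn]; exact h1), indicator_of_mem (by exact ⟨⟨hr, h1⟩, hθ⟩), hn,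
        smul_eq_mul, ← ENNReal.ofReal_mul hr.le]
      apply ENNReal.ofReal_le_ofReal
      have e : 1 - r ^ 2 = (1 - r) * (1 + r) := by ring
      rw [e, Real.mul_rpow (by linarith) (by linarith)]
      have h2 : (1 + r) ^ α ≤ 2 ^ |α| :=
        (Real.rpow_le_rpow_of_exponent_le (by linarith) (le_abs_self α)).trans
          (Real.rpow_le_rpow (by linarith) (by linarith) (abs_nonneg _))
      have h3 : 0 ≤ (1 - r) ^ α := Real.rpow_nonneg (by linarith) _
      have h4 : 0 ≤ (1 + r) ^ α := Real.rpow_nonneg (by linarith) _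
      calc r * ((1 - r) ^ α * (1 + r) ^ α) ≤ 1 * ((1 - r) ^ α * (1 + r) ^ α) := by gcongr
        _ ≤ _ := by rw [one_mul]; gcongr
    · rw [indicator_of_notMem (by rw [unitDisk, mem_ball_zero_iff, hn]; exact h1)]
      simp
  refine (setLIntegral_mono' polarCoord.open_target.measurableSet hb).trans_lt ?_
  refine (setLIntegral_le_lintegral _ _).trans_lt ?_
  rw [lintegral_indicator (measurableSet_Ioo.prod measurableSet_Ioo), Measure.volume_eq_prod, ← Measure.prod_restrict]
  have hI : IntegrableOn (fun r : ℝ => (1 - r) ^ α * 2 ^ |α|) (Ioo 0 1) := by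
    have := (intervalIntegral.intervalIntegrable_rpow' (a := 0) (b := 1) hα).comp_sub_left 1
    simp only [sub_zero, sub_self] at this
    have := this.symm.mul_const (2 ^ |α|)
    rwa [intervalIntegrable_iff_integrableOn_Ioo_of_le zero_le_one] at this
  have hI2 := hI.integrable.comp_fst (volume.restrict (Ioo (-Real.pi) Real.pi))
  exact hI2.lintegral_lt_top

lemma aux_key (α : ℝ) (z : ℂ) (hz : ‖z‖ < 1) :
    ∫⁻ w in unitDisk, ENNReal.ofReal ((1 - ‖z‖ ^ 2) ^ (α + 2) * (1 - ‖w‖ ^ 2) ^ α /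
      ‖1 - (starRingEnd ℂ) z * w‖ ^ (2 * (α + 2))) ≤
    ∫⁻ w in unitDisk, ENNReal.ofReal ((1 - ‖w‖ ^ 2) ^ α) := by
  have hm : MeasurableSet unitDisk := measurableSet_ball
  have hne : ∀ w ∈ unitDisk, 1 - (starRingEnd ℂ) z * w ≠ 0 := by
    intro w hw h
    have hw : ‖w‖ < 1 := by simpa [unitDisk] using hw
    have : ‖(starRingEnd ℂ) z * w‖ = 1 := by rw [← sub_eq_zero.1 h]; simp
    rw [norm_mul, RCLike.norm_conj] at this
    nlinarith [norm_nonneg z, norm_nonneg w]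
  set φ : ℂ → ℂ := fun w => (z - w) / (1 - (starRingEnd ℂ) z * w) with hφ
  set φ' : ℂ → ℂ := fun w => ((‖z‖ ^ 2 - 1 : ℝ) : ℂ) / (1 - (starRingEnd ℂ) z * w) ^ 2
  have hzz : z * (starRingEnd ℂ) z = (‖z‖ : ℂ) ^ 2 := Complex.mul_conj' z
  have hd : ∀ w ∈ unitDisk, HasDerivAt φ (φ' w) w := by
    intro w hw
    have h1 : HasDerivAt (fun w => z - w) (-1) w := by
      simpa using (hasDerivAt_id w).const_sub z
    have h2 : HasDerivAt (fun w => 1 - (starRingEnd ℂ) z * w) (-(starRingEnd ℂ) z) w := by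
      simpa using ((hasDerivAt_id w).const_mul ((starRingEnd ℂ) z)).const_sub 1
    refine (h1.div h2 (hne w hw)).congr_deriv ?_
    simp only [φ']
    congr 1
    push_cast
    linear_combination hzz
  have hinv : ∀ w ∈ unitDisk, 1 - ‖φ w‖ ^ 2 = (1 - ‖z‖ ^ 2) * (1 - ‖w‖ ^ 2) /
      ‖1 - (starRingEnd ℂ) z * w‖ ^ 2 := by
    intro w hw
    have h0 : ‖1 - (starRingEnd ℂ) z * w‖ ≠ 0 := norm_ne_zero_iff.2 (hne w hw)
    rw [hφ]
    simp only [norm_div, div_pow]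
    rw [_root_.eq_div_iff (by positivity), sub_mul, div_mul_cancel₀ _ (by positivity)]
    simp only [← Complex.normSq_eq_norm_sq, Complex.normSq_apply]
    simp
    ring
  have hz2 : 0 < 1 - ‖z‖ ^ 2 := by nlinarith [norm_nonneg z]
  have hw2 : ∀ w ∈ unitDisk, 0 < 1 - ‖w‖ ^ 2 := by
    intro w hw
    have hw : ‖w‖ < 1 := by simpa [unitDisk] using hw
    nlinarith [norm_nonneg w]
  have himg : φ '' unitDisk ⊆ unitDisk := by
    rintro _ ⟨w, hw, rfl⟩
    have h := hinv w hw
    have h0 : 0 < ‖1 - (starRingEnd ℂ) z * w‖ := norm_pos_iff.2 (hne w hw)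
    have : 0 < 1 - ‖φ w‖ ^ 2 := by
      rw [h]; have := hw2 w hw; positivity
    have : ‖φ w‖ < 1 := by nlinarith [norm_nonneg (φ w)]
    simpa [unitDisk] using this
  have hinj : InjOn φ unitDisk := by
    intro a ha b hb hab
    simp only [hφ] at hab
    rw [div_eq_div_iff (hne a ha) (hne b hb)] at hab
    have h : (1 - z * (starRingEnd ℂ) z) * (a - b) = 0 := by linear_combination -hab
    have h' : (1 - z * (starRingEnd ℂ) z) ≠ 0 := by
      rw [hzz]; exact_mod_cast hz2.ne'
    exact sub_eq_zero.1 ((mul_eq_zero.1 h).resolve_left h')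
  refine le_trans ?_ (lintegral_mono_set himg)
  rw [lintegral_image_eq_lintegral_abs_det_fderiv_mul volume hm
    (f' := fun w => (ContinuousLinearMap.toSpanSingleton ℂ (φ' w)).restrictScalars ℝ)
    (fun w hw => ((hd w hw).hasFDerivAt.restrictScalars ℝ).hasFDerivWithinAt) hinj]
  refine le_of_eq (setLIntegral_congr_fun hm fun w hw => ?_)
  have h0 : 0 < ‖1 - (starRingEnd ℂ) z * w‖ := norm_pos_iff.2 (hne w hw)
  have hw2' := hw2 w hw
  rw [aux_det, ← ENNReal.ofReal_mul (abs_nonneg _), hinv w hw, abs_of_nonneg (by positivity)]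
  congr 1
  simp only [φ']
  rw [norm_div, norm_pow, Complex.norm_real, Real.norm_eq_abs, abs_sub_comm, abs_of_pos hz2,
    Real.div_rpow (by positivity) (by positivity), Real.mul_rpow hz2.le hw2'.le,
    Real.rpow_add hz2, Real.rpow_two]
  have e : ‖1 - (starRingEnd ℂ) z * w‖ ^ (2 * (α + 2)) =
      (‖1 - (starRingEnd ℂ) z * w‖ ^ 2) ^ α * (‖1 - (starRingEnd ℂ) z * w‖ ^ 2) ^ 2 := by
    rw [Real.rpow_mul h0.le, Real.rpow_two, Real.rpow_add (by positivity), Real.rpow_two]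
  rw [e]
  have : 0 < (‖1 - (starRingEnd ℂ) z * w‖ ^ 2) ^ α := by positivity
  field_simp

lemma aux_slit (z w : ℂ) (hz : ‖z‖ < 1) (hw : ‖w‖ < 1) :
    1 - (starRingEnd ℂ) z * w ∈ Complex.slitPlane := by
  left
  have h1 := Complex.re_le_norm ((starRingEnd ℂ) z * w)
  rw [norm_mul, RCLike.norm_conj] at h1
  simp only [Complex.sub_re, Complex.one_re]
  nlinarith [norm_nonneg z, norm_nonneg w]

lemma aux_deriv_s14 (p α : ℝ) (z w : ℂ) (hz : ‖z‖ < 1) (hw : ‖w‖ < 1) :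
    HasDerivAt (testFn p α z) ((((1 - ‖z‖ ^ 2) ^ ((α + 2) / p) : ℝ) : ℂ) *
      ((2 * (α + 2) / p - 1 : ℝ) : ℂ) * (starRingEnd ℂ) z *
      (1 - (starRingEnd ℂ) z * w) ^ ((-(2 * (α + 2) / p) : ℝ) : ℂ)) w := by
  have hs := aux_slit z w hz hw
  have h2 : HasDerivAt (fun w => 1 - (starRingEnd ℂ) z * w) (-(starRingEnd ℂ) z) w := by
    simpa using ((hasDerivAt_id w).const_mul ((starRingEnd ℂ) z)).const_sub 1
  have h3 := (h2.cpow_const (c := -((2 * (α + 2) / p - 1 : ℝ) : ℂ)) hs).const_mul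
    ((((1 - ‖z‖ ^ 2) ^ ((α + 2) / p) : ℝ) : ℂ))
  have e : testFn p α z = fun w => (((1 - ‖z‖ ^ 2) ^ ((α + 2) / p) : ℝ) : ℂ) *
      (1 - (starRingEnd ℂ) z * w) ^ (-((2 * (α + 2) / p - 1 : ℝ) : ℂ)) := by
    funext w
    rw [testFn, Complex.cpow_neg, div_eq_mul_inv]
  rw [e]
  refine h3.congr_deriv ?_
  have e2 : -((2 * (α + 2) / p - 1 : ℝ) : ℂ) - 1 = ((-(2 * (α + 2) / p) : ℝ) : ℂ) := by
    push_cast; ring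
  rw [e2]
  ring

/-- The test functions `f_z` have uniformly bounded `D^p_α` norm, with
`f_z(z) = (1-|z|²)^{-(α+2-p)/p}` and `f'_z(z) = z̄ (2(α+2)-p)/p · (1-|z|²)^{-(α+2)/p}`. -/
theorem testFn_dirichlet_bounded (p α : ℝ) (hα : -1 < α) (hp : 0 < p) (hpα : p < α + 2) :
    ∃ C : ℝ, 0 < C ∧ ∀ z ∈ unitDisk,
      MemDirichlet p α (testFn p α z) ∧
      dirichletNorm p α (testFn p α z) ≤ C ∧
      testFn p α z z = ((1 / (1 - ‖z‖ ^ 2) ^ ((α + 2 - p) / p) : ℝ) : ℂ) ∧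
      deriv (testFn p α z) z =
        (starRingEnd ℂ) z * (((2 * (α + 2) - p) / p : ℝ) : ℂ) *
          ((1 / (1 - ‖z‖ ^ 2) ^ ((α + 2) / p) : ℝ) : ℂ) := by
  have hm : MeasurableSet unitDisk := measurableSet_ball
  set s : ℝ := 2 * (α + 2) / p - 1 with hs
  set K : ℝ≥0∞ := ENNReal.ofReal (Real.pi)⁻¹ * (ENNReal.ofReal (|s| ^ p) *
    ∫⁻ w in unitDisk, ENNReal.ofReal ((1 - ‖w‖ ^ 2) ^ α)) with hK
  have hKtop : K < ⊤ :=
    ENNReal.mul_lt_top ENNReal.ofReal_lt_top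
      (ENNReal.mul_lt_top ENNReal.ofReal_lt_top (aux_finite α hα))
  have hbound : ∀ z ∈ unitDisk, dirichletLintegral p α (testFn p α z) ≤ K := by
    intro z hz
    have hz : ‖z‖ < 1 := by simpa [unitDisk] using hz
    have hz2 : 0 < 1 - ‖z‖ ^ 2 := by nlinarith [norm_nonneg z]
    rw [dirichletLintegral, areaMeasure, Measure.restrict_smul, lintegral_smul_measure, hK,
      smul_eq_mul]
    gcongr
    refine le_trans ?_ (mul_le_mul_right (aux_key α z hz) _)
    rw [← lintegral_const_mul' _ _ ENNReal.ofReal_ne_top]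
    refine setLIntegral_mono' hm fun w hw => ?_
    have hw : ‖w‖ < 1 := by simpa [unitDisk] using hw
    have hw2 : 0 < 1 - ‖w‖ ^ 2 := by nlinarith [norm_nonneg w]
    have h0 : 0 < ‖1 - (starRingEnd ℂ) z * w‖ :=
      norm_pos_iff.2 (Complex.slitPlane_ne_zero (aux_slit z w hz hw))
    rw [← ENNReal.ofReal_mul (by positivity)]
    apply ENNReal.ofReal_le_ofReal
    rw [(aux_deriv_s14 p α z w hz hw).deriv, norm_mul, norm_mul, norm_mul, Complex.norm_cpow_real,
      Complex.norm_real, Complex.norm_real, RCLike.norm_conj, Real.norm_eq_abs, Real.norm_eq_abs,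
      abs_of_pos (by positivity), ← hs,
      Real.mul_rpow (by positivity) (by positivity), Real.mul_rpow (by positivity) (by positivity),
      Real.mul_rpow (by positivity) (by positivity), ← Real.rpow_mul hz2.le, ← Real.rpow_mul h0.le]
    have e1 : (α + 2) / p * p = α + 2 := by field_simp
    have e2 : -(2 * (α + 2) / p) * p = -(2 * (α + 2)) := by field_simp
    rw [e1, e2, Real.rpow_neg h0.le]
    have h1 : ‖z‖ ^ p ≤ 1 := Real.rpow_le_one (norm_nonneg _) hz.le hp.le
    calc _ ≤ (1 - ‖z‖ ^ 2) ^ (α + 2) * |s| ^ p * 1 *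
          (‖1 - (starRingEnd ℂ) z * w‖ ^ (2 * (α + 2)))⁻¹ * (1 - ‖w‖ ^ 2) ^ α := by gcongr
      _ = _ := by ring
  refine ⟨(1 + K.toReal) ^ (1 / p), by positivity, fun z hz' => ?_⟩
  have hz : ‖z‖ < 1 := by simpa [unitDisk] using hz'
  have hz2 : 0 < 1 - ‖z‖ ^ 2 := by nlinarith [norm_nonneg z]
  have hzz : 1 - (starRingEnd ℂ) z * z = ((1 - ‖z‖ ^ 2 : ℝ) : ℂ) := by
    rw [mul_comm, Complex.mul_conj']; push_cast; ring
  refine ⟨⟨fun w hw => ?_, (hbound z hz').trans_lt hKtop⟩, ?_, ?_, ?_⟩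
  · have hw : ‖w‖ < 1 := by simpa [unitDisk] using hw
    exact (aux_deriv_s14 p α z w hz hw).differentiableAt.differentiableWithinAt
  · rw [dirichletNorm]
    have h1 : ‖testFn p α z 0‖ ^ p ≤ 1 := by
      apply Real.rpow_le_one (norm_nonneg _) _ hp.le
      simp only [testFn, mul_zero, sub_zero, Complex.one_cpow, div_one]
      rw [Complex.norm_real, Real.norm_eq_abs, abs_of_pos (by positivity)]
      exact Real.rpow_le_one hz2.le (by nlinarith [norm_nonneg z])
        (div_nonneg (by linarith) hp.le)
    have h2 := ENNReal.toReal_mono hKtop.ne (hbound z hz')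
    gcongr
  · rw [testFn, hzz, ← Complex.ofReal_cpow hz2.le, ← Complex.ofReal_div]
    congr 1
    rw [← Real.rpow_sub hz2, one_div, ← Real.rpow_neg hz2.le]
    congr 1
    field_simp
    ring
  · rw [(aux_deriv_s14 p α z z hz hz).deriv, hzz, ← Complex.ofReal_cpow hz2.le]
    have e : (1 - ‖z‖ ^ 2) ^ ((α + 2) / p) * (1 - ‖z‖ ^ 2) ^ (-(2 * (α + 2) / p)) =
        1 / (1 - ‖z‖ ^ 2) ^ ((α + 2) / p) := by
      rw [← Real.rpow_add hz2, one_div, ← Real.rpow_neg hz2.le]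
      congr 1
      ring
    have e2 : 2 * (α + 2) / p - 1 = (2 * (α + 2) - p) / p := by field_simp
    rw [← e, e2]
    push_cast
    ring
end
end
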